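/- arXiv:2204.09512 — 8 statements merged into one kernel-verified Lean document; each statement's English description precedes it below -/
import Mathlib

section
/- Let 𝐊 be a class of T0 topological spaces (whose members are called 𝐊-spaces) such that every sober space is a 𝐊-space and any space homeomorphic to a 𝐊-space is a 𝐊-space. Let X be a T0 space and A a closed subset of X, equipped with the subspace topology. Then every subset of A that is a closed 𝐊-set of the space A is a closed 𝐊-set of X; that is, 𝐊(A) ⊆ 𝐊(X). -/
universe u v

open Set

/-- The specialization order on a topological space: `specLE x y` iff `x ∈ closure {y}`. -/
def specLE {X : Type*} [TopologicalSpace X] (x y : X) : Prop :=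
  x ∈ closure ({y} : Set X)

/-- `a` is an upper bound of `D` with respect to the specialization order. -/
def specUB {X : Type*} [TopologicalSpace X] (D : Set X) (a : X) : Prop :=
  ∀ d ∈ D, specLE d a

/-- `a` is a least upper bound of `D` with respect to the specialization order. -/
def specLUB {X : Type*} [TopologicalSpace X] (D : Set X) (a : X) : Prop :=
  specUB D a ∧ ∀ b, specUB D b → specLE a b

/-- `U` is Scott open with respect to the specialization order. -/
def ScottOpenSpec {X : Type*} [TopologicalSpace X] (U : Set X) : Prop :=
  (∀ x y, specLE x y → x ∈ U → y ∈ U) ∧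
  ∀ D : Set X, D.Nonempty → DirectedOn specLE D → ∀ a, specLUB D a → a ∈ U →
    (D ∩ U).Nonempty

/-- A d-space (monotone convergence space): a T0 space which is a dcpo in its
specialization order and in which every open set is Scott open with respect to
the specialization order. -/
def DSpace (X : Type*) [TopologicalSpace X] : Prop :=
  T0Space X ∧
  (∀ D : Set X, D.Nonempty → DirectedOn specLE D → ∃ a, specLUB D a) ∧
  (∀ U : Set X, IsOpen U → ScottOpenSpec U)

/-- A set is saturated if it is an intersection of open sets. -/
def Saturated {X : Type*} [TopologicalSpace X] (A : Set X) : Prop :=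
  ∃ 𝒰 : Set (Set X), (∀ U ∈ 𝒰, IsOpen U) ∧ A = ⋂₀ 𝒰

/-- A T0 space is well-filtered if every filtered (under reverse inclusion) family of
nonempty compact saturated sets whose intersection is contained in an open set `U`
has a member contained in `U`. -/
def WellFiltered (X : Type*) [TopologicalSpace X] : Prop :=
  T0Space X ∧
  ∀ 𝒦 : Set (Set X), 𝒦.Nonempty →
    (∀ K ∈ 𝒦, K.Nonempty ∧ IsCompact K ∧ Saturated K) →
    DirectedOn (fun A B => B ⊆ A) 𝒦 →
    ∀ U : Set X, IsOpen U → ⋂₀ 𝒦 ⊆ U → ∃ K ∈ 𝒦, K ⊆ U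

/-- A nonempty closed set which is irreducible. -/
def IrredClosed {X : Type*} [TopologicalSpace X] (A : Set X) : Prop :=
  A.Nonempty ∧ IsClosed A ∧
  ∀ F₁ F₂ : Set X, IsClosed F₁ → IsClosed F₂ → A ⊆ F₁ ∪ F₂ → (A ⊆ F₁ ∨ A ⊆ F₂)

/-- A space is sober if every irreducible closed set is the closure of a unique point. -/
def Sober (X : Type*) [TopologicalSpace X] : Prop :=
  ∀ A : Set X, IrredClosed A → ∃! x : X, A = closure ({x} : Set X)

/-- The specialization preorder on a topological space. -/
def specPreorder (Y : Type*) [TopologicalSpace Y] : Preorder Y where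
  le := specLE
  le_refl x := subset_closure rfl
  le_trans x y z hxy hyz :=
    closure_minimal (Set.singleton_subset_iff.mpr hyz) isClosed_closure hxy

/-- A Scott open subset of a poset: an upper set inaccessible by suprema of directed sets. -/
def IsScottOpen {P : Type*} [Preorder P] (U : Set P) : Prop :=
  IsUpperSet U ∧
  ∀ D : Set P, D.Nonempty → DirectedOn (· ≤ ·) D → ∀ a, IsLUB D a → a ∈ U →
    (D ∩ U).Nonempty

/-- The Scott topology on a poset. `Σ P` is `P` equipped with `scottTop P`. -/
def scottTop (P : Type*) [Preorder P] : TopologicalSpace P where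
  IsOpen := IsScottOpen
  isOpen_univ := by
    refine ⟨isUpperSet_univ, fun D hD _ _ _ _ => ?_⟩
    obtain ⟨d, hd⟩ := hD
    exact ⟨d, hd, trivial⟩
  isOpen_inter := by
    rintro U V ⟨hU1, hU2⟩ ⟨hV1, hV2⟩
    refine ⟨hU1.inter hV1, ?_⟩
    rintro D hne hdir a ha ⟨haU, haV⟩
    obtain ⟨d1, hd1D, hd1U⟩ := hU2 D hne hdir a ha haU
    obtain ⟨d2, hd2D, hd2V⟩ := hV2 D hne hdir a ha haV
    obtain ⟨d3, hd3D, h13, h23⟩ := hdir d1 hd1D d2 hd2D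
    exact ⟨d3, hd3D, hU1 h13 hd1U, hV1 h23 hd2V⟩
  isOpen_sUnion := by
    intro S hS
    refine ⟨isUpperSet_sUnion fun s hs => (hS s hs).1, ?_⟩
    rintro D hne hdir a ha ⟨U, hUS, haU⟩
    obtain ⟨d, hdD, hdU⟩ := (hS U hUS).2 D hne hdir a ha haU
    exact ⟨d, hdD, U, hUS, hdU⟩

/-- A dcpo: every nonempty directed subset has a least upper bound. -/
def IsDcpo (P : Type*) [Preorder P] : Prop :=
  ∀ D : Set P, D.Nonempty → DirectedOn (· ≤ ·) D → ∃ a, IsLUB D a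

/-- The way-below relation. -/
def wayBelow {P : Type*} [Preorder P] (x y : P) : Prop :=
  ∀ D : Set P, D.Nonempty → DirectedOn (· ≤ ·) D → ∀ a, IsLUB D a → y ≤ a →
    ∃ d ∈ D, x ≤ d

/-- A poset is Noetherian if every (nonempty) directed subset has a greatest member. -/
def Noetherian (P : Type*) [Preorder P] : Prop :=
  ∀ D : Set P, D.Nonempty → DirectedOn (· ≤ ·) D → ∃ m ∈ D, ∀ d ∈ D, d ≤ m

/-- An ideal: a (nonempty) directed lower set. -/
def IsIdealSet {P : Type*} [Preorder P] (I : Set P) : Prop :=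
  I.Nonempty ∧ DirectedOn (· ≤ ·) I ∧ IsLowerSet I

/-- The Alexandroff topology on a poset: the open sets are the upper sets. -/
def alexTop (P : Type*) [Preorder P] : TopologicalSpace P where
  IsOpen := IsUpperSet
  isOpen_univ := isUpperSet_univ
  isOpen_inter _ _ := IsUpperSet.inter
  isOpen_sUnion _ h := isUpperSet_sUnion h

/-- The space `X_⊤` obtained from `X` by adjoining a new top point `⊤` (here `none`):
the closed sets are the closed sets of `X` together with the whole space. -/
def topTop (X : Type*) [TopologicalSpace X] : TopologicalSpace (Option X) where
  IsOpen V := V = ∅ ∨ ∃ U : Set X, IsOpen U ∧ V = insert none (some '' U)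
  isOpen_univ := by
    refine Or.inr ⟨Set.univ, isOpen_univ, ?_⟩
    ext (_ | a) <;> simp
  isOpen_inter := by
    rintro V W (rfl | ⟨U₁, hU₁, rfl⟩) hW
    · exact Or.inl (by simp)
    rcases hW with rfl | ⟨U₂, hU₂, rfl⟩
    · exact Or.inl (by simp)
    · refine Or.inr ⟨U₁ ∩ U₂, hU₁.inter hU₂, ?_⟩
      ext (_ | a) <;> simp
  isOpen_sUnion := by
    classical
    intro S hS
    by_cases h0 : ⋃₀ S = ∅
    · exact Or.inl h0
    · refine Or.inr ⟨{x : X | some x ∈ ⋃₀ S}, ?_, ?_⟩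
      · have h1 : {x : X | some x ∈ ⋃₀ S} = ⋃ V ∈ S, some ⁻¹' V := by
          ext x; simp [Set.mem_sUnion]
        rw [h1]
        refine isOpen_biUnion fun V hV => ?_
        rcases hS V hV with rfl | ⟨U, hU, rfl⟩
        · rw [Set.preimage_empty]; exact isOpen_empty
        · have h2 : (some ⁻¹' (insert none (some '' U)) : Set X) = U := by
            ext x; simp
          rw [h2]; exact hU
      · have hnone : (none : Option X) ∈ ⋃₀ S := by
          obtain ⟨v, V, hVS, hvV⟩ := Set.nonempty_iff_ne_empty.mpr h0
          rcases hS V hVS with rfl | ⟨U, hU, rfl⟩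
          · exact absurd hvV (by simp)
          · exact ⟨_, hVS, by simp⟩
        ext (_ | a)
        · simp only [Set.mem_insert_iff, true_or, iff_true]
          exact hnone
        · simp [Set.mem_sUnion]

/-- A `𝐊`-set of a space `X` (relative to a class `K` of spaces): a set whose image
under any continuous map to a `𝐊`-space has the closure of a unique point as closure. -/
def IsKSet (K : (Y : Type u) → TopologicalSpace Y → Prop)
    (X : Type u) [tX : TopologicalSpace X] (A : Set X) : Prop :=
  ∀ (Y : Type u) (tY : TopologicalSpace Y), K Y tY →
    ∀ f : X → Y, @Continuous X Y tX tY f →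
      ∃! y : Y, @closure Y tY (f '' A) = @closure Y tY {y}

/-- `𝐊(X)`: the collection of closed `𝐊`-sets of `X`. -/
def KSets (K : (Y : Type u) → TopologicalSpace Y → Prop)
    (X : Type u) [TopologicalSpace X] : Set (Set X) :=
  {A : Set X | IsClosed A ∧ IsKSet K X A}

/-- The lower Vietoris topology on a family `G` of subsets of `X`, generated by the
sets `◊U = {A ∈ G | A ∩ U ≠ ∅}` for `U` open. -/
def lowerVietoris {X : Type*} [TopologicalSpace X] (G : Set (Set X)) :
    TopologicalSpace ↥G :=
  TopologicalSpace.generateFrom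
    {S : Set ↥G | ∃ U : Set X, IsOpen U ∧ S = {A : ↥G | ((A : Set X) ∩ U).Nonempty}}

/-- A class `K` of spaces is adequate if `P_H(𝐊(X))` is a `𝐊`-space for every T0 space `X`. -/
def Adequate (K : (Y : Type u) → TopologicalSpace Y → Prop) : Prop :=
  ∀ (X : Type u) (tX : TopologicalSpace X), @T0Space X tX →
    K ↥(@KSets K X tX) (@lowerVietoris X tX (@KSets K X tX))

/-- `⟨Z, η⟩` is a `𝐊`-reflection of `X`. -/
def IsKReflection (K : (Y : Type u) → TopologicalSpace Y → Prop)
    (X : Type u) (tX : TopologicalSpace X)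
    (Z : Type u) (tZ : TopologicalSpace Z) (η : X → Z) : Prop :=
  K Z tZ ∧ @Continuous X Z tX tZ η ∧
  ∀ (Y : Type u) (tY : TopologicalSpace Y), K Y tY →
    ∀ f : X → Y, @Continuous X Y tX tY f →
      ∃! g : Z → Y, @Continuous Z Y tZ tY g ∧ g ∘ η = f

/-- The carrier of the Johnstone poset `𝕁 = ℕ × (ℕ ∪ {ω})`. -/
structure Johnstone where
  fst : ℕ
  snd : WithTop ℕ

/-- The Johnstone order: `(j, k) ≤ (m, n)` iff `j = m` and `k ≤ n`, or `n = ω` and `k ≤ m`. -/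
instance : PartialOrder Johnstone where
  le p q := (p.fst = q.fst ∧ p.snd ≤ q.snd) ∨ (q.snd = ⊤ ∧ p.snd ≤ (q.fst : WithTop ℕ))
  le_refl p := Or.inl ⟨rfl, le_rfl⟩
  le_trans p q r hpq hqr := by
    rcases hpq with ⟨h1, h2⟩ | ⟨h1, h2⟩ <;> rcases hqr with ⟨h3, h4⟩ | ⟨h3, h4⟩
    · exact Or.inl ⟨h1.trans h3, h2.trans h4⟩
    · exact Or.inr ⟨h3, h2.trans h4⟩
    · have hr : r.snd = ⊤ := top_le_iff.mp (h1 ▸ h4)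
      exact Or.inr ⟨hr, h3 ▸ h2⟩
    · rw [h1] at h4
      exact absurd h4 (by simp)
  le_antisymm p q hpq hqp := by
    obtain ⟨pf, ps⟩ := p
    obtain ⟨qf, qs⟩ := q
    rcases hpq with ⟨h1, h2⟩ | ⟨h1, h2⟩ <;> rcases hqp with ⟨h3, h4⟩ | ⟨h3, h4⟩
    · dsimp at *
      cases h1
      cases le_antisymm h2 h4
      rfl
    · dsimp at *
      rw [h3] at h2
      rw [top_le_iff.mp h2] at h4
      exact absurd h4 (by simp)
    · dsimp at *
      rw [h1] at h4
      rw [top_le_iff.mp h4] at h2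
      exact absurd h2 (by simp)
    · dsimp at *
      rw [h3] at h2
      exact absurd h2 (by simp)

/-- The class of d-spaces. -/
def dClass : (Y : Type u) → TopologicalSpace Y → Prop := fun Y tY => @DSpace Y tY

/-- The class of well-filtered spaces. -/
def wfClass : (Y : Type u) → TopologicalSpace Y → Prop := fun Y tY => @WellFiltered Y tY

/-- The class of sober spaces. -/
def soberClass : (Y : Type u) → TopologicalSpace Y → Prop := fun Y tY => @Sober Y tY
/-- For a class `K` of T0 spaces containing all sober spaces and closed
under homeomorphisms, and a closed subspace `A` of a T0 space `X`, every closed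
`𝐊`-set of `A` is a closed `𝐊`-set of `X`, i.e. `𝐊(A) ⊆ 𝐊(X)`. -/
theorem stmt0
    (K : (Y : Type u) → TopologicalSpace Y → Prop)
    (hT0 : ∀ (Y : Type u) (tY : TopologicalSpace Y), K Y tY → @T0Space Y tY)
    (hSober : ∀ (Y : Type u) (tY : TopologicalSpace Y), @Sober Y tY → K Y tY)
    (hHomeo : ∀ (Y : Type u) (tY : TopologicalSpace Y) (Z : Type u) (tZ : TopologicalSpace Z),
      K Y tY → Nonempty (@Homeomorph Y Z tY tZ) → K Z tZ)
    (X : Type u) [TopologicalSpace X] [T0Space X]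
    (A : Set X) (hA : IsClosed A)
    (B : Set ↥A) (hB : B ∈ KSets K ↥A) :
    (Subtype.val '' B) ∈ KSets K X := by
  refine ⟨hA.isClosedEmbedding_subtypeVal.isClosedMap _ hB.1, ?_⟩
  intro Y tY hY f hf
  have h := hB.2 Y tY hY (fun a => f a.1) (hf.comp continuous_subtype_val)
  rw [Set.image_image]
  exact h
end

section
/- For a T0 topological space X, let X_⊤ be the space obtained from X by adjoining a new point ⊤, whose closed sets are exactly the closed sets of X together with the whole set X ∪ {⊤}. Then: (a) X is well-filtered if and only if X_⊤ is well-filtered; (b) X is a d-space if and only if X_⊤ is a d-space. -/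
universe u v

open Set

section Helpers

attribute [local instance] topTop

theorem tt_open_iff {X : Type*} [TopologicalSpace X] (V : Set (Option X)) :
    IsOpen V ↔ V = ∅ ∨ ∃ U : Set X, IsOpen U ∧ V = insert none (some '' U) := Iff.rfl

theorem tt_open_ins {X : Type*} [TopologicalSpace X] {U : Set X} (hU : IsOpen U) :
    IsOpen (insert none (some '' U) : Set (Option X)) := Or.inr ⟨U, hU, rfl⟩

theorem tt_open_pre {X : Type*} [TopologicalSpace X] {V : Set (Option X)} (hV : IsOpen V) :
    IsOpen (some ⁻¹' V : Set X) := by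
  rcases hV with rfl | ⟨U, hU, rfl⟩
  · simp
  · convert hU
    ext x; simp

theorem tt_none_mem {X : Type*} [TopologicalSpace X] {V : Set (Option X)} (hV : IsOpen V)
    (h : V.Nonempty) : none ∈ V := by
  rcases hV with rfl | ⟨U, hU, rfl⟩
  · simp at h
  · simp

theorem spec_iff {X : Type*} [TopologicalSpace X] (x y : X) :
    specLE x y ↔ ∀ U : Set X, IsOpen U → x ∈ U → y ∈ U := by
  unfold specLE
  rw [mem_closure_iff]
  refine forall₃_congr fun U _ _ => ?_
  simp

theorem tt_le_none {X : Type*} [TopologicalSpace X] (a : Option X) : specLE a none := by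
  rw [spec_iff]
  exact fun U hU h => tt_none_mem hU ⟨_, h⟩

theorem tt_le_some {X : Type*} [TopologicalSpace X] (x y : X) :
    specLE (some x) (some y) ↔ specLE x y := by
  rw [spec_iff, spec_iff]
  constructor
  · intro h U hU hx
    have := h _ (tt_open_ins hU) (by simpa using hx)
    simpa using this
  · intro h V hV hx
    exact h _ (tt_open_pre hV) hx

theorem tt_open_none {X : Type*} [TopologicalSpace X] : IsOpen ({none} : Set (Option X)) :=
  Or.inr ⟨∅, isOpen_empty, by simp⟩

theorem tt_not_le {X : Type*} [TopologicalSpace X] (x : X) :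
    ¬ specLE (none : Option X) (some x) := by
  rw [spec_iff]
  intro h
  have := h _ tt_open_none rfl
  simp at this

theorem tt_t0 (X : Type*) [TopologicalSpace X] [T0Space X] : T0Space (Option X) := by
  refine ⟨fun a b h => ?_⟩
  have h1 : specLE a b := (spec_iff a b).2 fun U hU ha => (h.mem_open_iff hU).1 ha
  have h2 : specLE b a := (spec_iff b a).2 fun U hU ha => (h.mem_open_iff hU).2 ha
  rcases a with _ | a <;> rcases b with _ | b
  · rfl
  · exact absurd h1 (tt_not_le b)
  · exact absurd h2 (tt_not_le a)
  · rw [tt_le_some, spec_iff] at h1 h2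
    have : Inseparable a b := inseparable_iff_forall_isOpen.2
      fun U hU => ⟨h1 U hU, h2 U hU⟩
    rw [this.eq]

theorem tt_cpt_pre {X : Type*} [TopologicalSpace X] {K : Set (Option X)} (hK : IsCompact K) :
    IsCompact (some ⁻¹' K : Set X) := by
  classical
  refine isCompact_of_finite_subcover fun {ι} U hU hc => ?_
  obtain ⟨t, ht⟩ := hK.elim_finite_subcover
    (fun o : Option ι => o.elim ({none} : Set (Option X)) fun i => insert none (some '' U i))
    (by rintro (_ | i)
        · exact tt_open_none
        · exact tt_open_ins (hU i))
    (by rintro (_ | x) hx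
        · exact mem_iUnion.2 ⟨none, rfl⟩
        · obtain ⟨i, hi⟩ := mem_iUnion.1 (hc hx)
          exact mem_iUnion.2 ⟨some i, by simpa using hi⟩)
  refine ⟨t.eraseNone, fun x hx => ?_⟩
  obtain ⟨o, ho, hxo⟩ := mem_iUnion₂.1 (ht hx)
  rcases o with _ | i
  · simp at hxo
  · exact mem_iUnion₂.2 ⟨i, by simpa using ho, by simpa using hxo⟩

theorem tt_cont (X : Type*) [TopologicalSpace X] : Continuous (some : X → Option X) :=
  ⟨fun _ hV => tt_open_pre hV⟩

theorem tt_sat_pre {X : Type*} [TopologicalSpace X] {K : Set (Option X)} (hK : Saturated K) :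
    Saturated (some ⁻¹' K : Set X) := by
  obtain ⟨S, hS, rfl⟩ := hK
  refine ⟨(fun V => some ⁻¹' V) '' S, ?_, ?_⟩
  · rintro _ ⟨V, hV, rfl⟩
    exact tt_open_pre (hS V hV)
  · ext x; simp

theorem tt_sat_ins {X : Type*} [TopologicalSpace X] {K : Set X} (hK : Saturated K) :
    Saturated (insert none (some '' K) : Set (Option X)) := by
  obtain ⟨S, hS, rfl⟩ := hK
  refine ⟨(fun U => insert none (some '' U)) '' S, ?_, ?_⟩
  · rintro _ ⟨V, hV, rfl⟩
    exact tt_open_ins (hS V hV)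
  · ext (_ | x) <;> simp

theorem tt_sat_none {X : Type*} [TopologicalSpace X] {K : Set (Option X)} (hK : Saturated K)
    (h : K.Nonempty) : none ∈ K := by
  obtain ⟨S, hS, rfl⟩ := hK
  obtain ⟨a, ha⟩ := h
  exact fun V hV => tt_none_mem (hS V hV) ⟨a, ha V hV⟩

theorem tt_wf (X : Type*) [TopologicalSpace X] [T0Space X] :
    WellFiltered X ↔ WellFiltered (Option X) := by
  constructor
  · rintro ⟨-, h⟩
    refine ⟨tt_t0 X, fun 𝒦 hne hK hdir V hV hsub => ?_⟩
    have hn : none ∈ V := hsub fun K hk => tt_sat_none (hK K hk).2.2 (hK K hk).1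
    by_cases hE : ∃ K ∈ 𝒦, (some ⁻¹' K : Set X) = ∅
    · obtain ⟨K, hk, he⟩ := hE
      refine ⟨K, hk, ?_⟩
      rintro (_ | x) hx
      · exact hn
      · have : x ∈ (some ⁻¹' K : Set X) := hx
        rw [he] at this
        exact this.elim
    · obtain ⟨_, ⟨K, hk, rfl⟩, hs⟩ := h ((fun K => some ⁻¹' K) '' 𝒦) (hne.image _)
        (by rintro _ ⟨K, hk, rfl⟩
            exact ⟨nonempty_iff_ne_empty.2 fun he => hE ⟨K, hk, he⟩, tt_cpt_pre (hK K hk).2.1,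
              tt_sat_pre (hK K hk).2.2⟩)
        (by rintro _ ⟨A, hA, rfl⟩ _ ⟨B, hB, rfl⟩
            obtain ⟨C, hC, h1, h2⟩ := hdir A hA B hB
            exact ⟨_, ⟨C, hC, rfl⟩, preimage_mono h1, preimage_mono h2⟩)
        (some ⁻¹' V) (tt_open_pre hV)
        (fun x hx => hsub fun K hk => hx _ ⟨K, hk, rfl⟩)
      refine ⟨K, hk, ?_⟩
      rintro (_ | x) hx
      · exact hn
      · exact hs hx
  · rintro ⟨-, h⟩
    refine ⟨inferInstance, fun 𝒦 hne hK hdir U hU hsub => ?_⟩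
    obtain ⟨_, ⟨K, hk, rfl⟩, hs⟩ := h ((fun K => insert none (some '' K)) '' 𝒦) (hne.image _)
      (by rintro _ ⟨K, hk, rfl⟩
          exact ⟨⟨none, by simp⟩, ((hK K hk).2.1.image (tt_cont X)).insert none,
            tt_sat_ins (hK K hk).2.2⟩)
      (by rintro _ ⟨A, hA, rfl⟩ _ ⟨B, hB, rfl⟩
          obtain ⟨C, hC, h1, h2⟩ := hdir A hA B hB
          exact ⟨_, ⟨C, hC, rfl⟩, insert_subset_insert (image_mono h1),
            insert_subset_insert (image_mono h2)⟩)
      _ (tt_open_ins hU)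
      (by rintro (_ | x) hx
          · simp
          · have : x ∈ U := hsub fun K hk => by simpa using hx _ ⟨K, hk, rfl⟩
            simpa using this)
    refine ⟨K, hk, fun x hx => ?_⟩
    have : some x ∈ insert none (some '' U) := hs (by simpa using hx)
    simpa using this

theorem tt_lub_some {X : Type*} [TopologicalSpace X] (D : Set X) (a : X)
    (h : specLUB D a) : specLUB (some '' D) (some a) := by
  constructor
  · rintro _ ⟨d, hd, rfl⟩
    exact (tt_le_some _ _).2 (h.1 d hd)
  · rintro (_ | b) hb
    · exact tt_le_none _
    · exact (tt_le_some _ _).2 (h.2 b fun d hd => (tt_le_some _ _).1 (hb _ ⟨d, hd, rfl⟩))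

theorem tt_some_lub {X : Type*} [TopologicalSpace X] (D : Set X) (a : X)
    (h : specLUB (some '' D) (some a)) : specLUB D a := by
  constructor
  · intro d hd
    exact (tt_le_some _ _).1 (h.1 _ ⟨d, hd, rfl⟩)
  · intro b hb
    refine (tt_le_some _ _).1 (h.2 (some b) ?_)
    rintro _ ⟨d, hd, rfl⟩
    exact (tt_le_some _ _).2 (hb d hd)

theorem tt_dir {X : Type*} [TopologicalSpace X] (D : Set X) :
    DirectedOn specLE (some '' D) ↔ DirectedOn specLE D := by
  constructor
  · intro h a ha b hb
    obtain ⟨_, ⟨c, hc, rfl⟩, h1, h2⟩ := h _ ⟨a, ha, rfl⟩ _ ⟨b, hb, rfl⟩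
    exact ⟨c, hc, (tt_le_some _ _).1 h1, (tt_le_some _ _).1 h2⟩
  · rintro h _ ⟨a, ha, rfl⟩ _ ⟨b, hb, rfl⟩
    obtain ⟨c, hc, h1, h2⟩ := h a ha b hb
    exact ⟨_, ⟨c, hc, rfl⟩, (tt_le_some _ _).2 h1, (tt_le_some _ _).2 h2⟩

theorem tt_eq_image {X : Type*} (D : Set (Option X)) (h : none ∉ D) :
    ∃ D' : Set X, D = some '' D' := by
  refine ⟨some ⁻¹' D, ?_⟩
  ext (_ | x)
  · simpa using h
  · simp

theorem tt_d (X : Type*) [TopologicalSpace X] [T0Space X] :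
    DSpace X ↔ DSpace (Option X) := by
  constructor
  · rintro ⟨-, hl, ho⟩
    refine ⟨tt_t0 X, fun D hne hdir => ?_, fun V hV => ⟨fun x y hxy => (spec_iff x y).1 hxy V hV,
      fun D hne hdir a ha haV => ?_⟩⟩
    · by_cases hn : none ∈ D
      · exact ⟨none, fun d _ => tt_le_none d, fun b hb => hb _ hn⟩
      · obtain ⟨D, rfl⟩ := tt_eq_image D hn
        obtain ⟨a, ha⟩ := hl D (by simpa using hne) ((tt_dir D).1 hdir)
        exact ⟨_, tt_lub_some D a ha⟩
    · by_cases hn : none ∈ D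
      · exact ⟨none, hn, tt_none_mem hV ⟨a, haV⟩⟩
      · obtain ⟨D, rfl⟩ := tt_eq_image D hn
        have hne' : D.Nonempty := by simpa using hne
        have hdir' := (tt_dir D).1 hdir
        obtain ⟨b, hb⟩ := hl D hne' hdir'
        have hab := ha.2 _ (tt_lub_some D b hb).1
        rcases a with _ | a
        · exact absurd hab (tt_not_le b)
        · obtain ⟨d, hd, hdV⟩ := (ho _ (tt_open_pre hV)).2 D hne' hdir' a (tt_some_lub D a ha) haV
          exact ⟨some d, ⟨d, hd, rfl⟩, hdV⟩
  · rintro ⟨-, hl, ho⟩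
    refine ⟨inferInstance, fun D hne hdir => ?_, fun U hU => ⟨fun x y hxy => (spec_iff x y).1 hxy U hU,
      fun D hne hdir a ha haU => ?_⟩⟩
    · obtain ⟨a, ha⟩ := hl _ (hne.image some) ((tt_dir D).2 hdir)
      rcases a with _ | a
      · obtain ⟨_, ⟨d, hd, rfl⟩, h⟩ :=
          (ho _ tt_open_none).2 _ (hne.image some) ((tt_dir D).2 hdir) none ha rfl
        simp at h
      · exact ⟨a, tt_some_lub D a ha⟩
    · obtain ⟨_, ⟨d, hd, rfl⟩, h⟩ := (ho _ (tt_open_ins hU)).2 _ (hne.image some)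
        ((tt_dir D).2 hdir) (some a) (tt_lub_some D a ha) (by simpa using haU)
      exact ⟨d, hd, by simpa using h⟩

end Helpers

/-- For a T0 space `X`: (a) `X` is well-filtered iff `X_⊤` is well-filtered;
(b) `X` is a d-space iff `X_⊤` is a d-space. -/
theorem stmt3 (X : Type*) [TopologicalSpace X] [T0Space X] :
    (WellFiltered X ↔ @WellFiltered (Option X) (topTop X)) ∧
    (DSpace X ↔ @DSpace (Option X) (topTop X)) := by
  exact ⟨tt_wf X, tt_d X⟩
end

section
/- Let 𝐊 be a class of T0 topological spaces such that: every sober space is a 𝐊-space; any space homeomorphic to a 𝐊-space is a 𝐊-space; every 𝐊-space is a d-space; and 𝐊 is adequate. Let X be a 𝐊-space, Y a T0 space, and f, g : X → Y continuous maps. Then the equalizer E(f, g) = {x ∈ X : f(x) = g(x)}, equipped with the subspace topology, is a 𝐊-space. -/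
universe u v

open Set

/-- If `K` is an adequate class of T0 spaces containing all sober spaces,
closed under homeomorphisms and contained in the d-spaces, then the equalizer of two
continuous maps from a `𝐊`-space to a T0 space is a `𝐊`-space. -/
theorem stmt4
    (K : (Y : Type u) → TopologicalSpace Y → Prop)
    (hT0 : ∀ (Y : Type u) (tY : TopologicalSpace Y), K Y tY → @T0Space Y tY)
    (hSober : ∀ (Y : Type u) (tY : TopologicalSpace Y), @Sober Y tY → K Y tY)
    (hHomeo : ∀ (Y : Type u) (tY : TopologicalSpace Y) (Z : Type u) (tZ : TopologicalSpace Z),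
      K Y tY → Nonempty (@Homeomorph Y Z tY tZ) → K Z tZ)
    (hD : ∀ (Y : Type u) (tY : TopologicalSpace Y), K Y tY → @DSpace Y tY)
    (hAdeq : Adequate K)
    (X : Type u) [tX : TopologicalSpace X] (hX : K X tX)
    (Y : Type u) [tY : TopologicalSpace Y] [T0Space Y]
    (f g : X → Y) (hf : Continuous f) (hg : Continuous g) :
    K {x : X // f x = g x} inferInstance := by
  have hXT : T0Space X := hT0 X tX hX
  -- point closures are closed K-sets
  have hpt : ∀ x : {x : X // f x = g x}, closure {x} ∈ KSets K {x : X // f x = g x} := by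
    intro x
    refine ⟨isClosed_closure, ?_⟩
    intro Z tZ hZ h hh
    have := hT0 Z tZ hZ
    refine ⟨h x, ?_, ?_⟩
    · have h1 := closure_image_closure (s := {x}) hh
      simpa using h1
    · intro y hy
      have h1 := closure_image_closure (s := {x}) hh
      rw [hy, image_singleton] at h1
      exact (inseparable_iff_closure_eq.2 h1).eq
  -- every closed K-set is a point closure
  have hsurj : ∀ A ∈ KSets K {x : X // f x = g x}, ∃ x, closure {x} = A := by
    rintro A ⟨hAc, hAK⟩
    obtain ⟨x, hx, -⟩ := hAK X tX hX Subtype.val continuous_subtype_val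
    have key : ∀ k : X → Y, Continuous k →
        closure (k '' (Subtype.val '' A)) = closure {k x} := by
      intro k hk
      rw [← closure_image_closure hk, hx, closure_image_closure hk, image_singleton]
    have hfg : f '' (Subtype.val '' A) = g '' (Subtype.val '' A) := by
      apply image_congr
      rintro _ ⟨a, -, rfl⟩
      exact a.2
    have he : f x = g x := by
      apply Inseparable.eq
      rw [inseparable_iff_closure_eq, ← key f hf, ← key g hg, hfg]
    refine ⟨⟨x, he⟩, ?_⟩
    have hc : ∀ B : Set {x : X // f x = g x},
        closure B = Subtype.val ⁻¹' closure (Subtype.val '' B) := fun B =>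
      Topology.IsInducing.subtypeVal.closure_eq_preimage_closure_image B
    have h1 := hc A
    rw [hAc.closure_eq, hx] at h1
    have h2 := hc {⟨x, he⟩}
    rw [image_singleton] at h2
    exact h2.trans h1.symm
  have hK := hAdeq {x : X // f x = g x} inferInstance inferInstance
  let η : {x : X // f x = g x} → KSets K {x : X // f x = g x} := fun x => ⟨closure {x}, hpt x⟩
  have hη : Function.Bijective η := by
    constructor
    · intro x y hxy
      exact (inseparable_iff_closure_eq.2 (congrArg Subtype.val hxy)).eq
    · rintro ⟨A, hA⟩
      obtain ⟨x, hx⟩ := hsurj A hA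
      exact ⟨x, Subtype.ext hx⟩
  have hpre : ∀ U : Set {x : X // f x = g x}, IsOpen U →
      η ⁻¹' {A | ((A : Set {x : X // f x = g x}) ∩ U).Nonempty} = U := by
    intro U hU
    ext x
    change (closure {x} ∩ U).Nonempty ↔ x ∈ U
    rw [closure_inter_open_nonempty_iff hU]
    simp
  letI tV := lowerVietoris (KSets K {x : X // f x = g x})
  have hind : Topology.IsInducing η := by
    constructor
    change _ = TopologicalSpace.induced η (TopologicalSpace.generateFrom _)
    rw [induced_generateFrom_eq]
    apply le_antisymm
    · apply le_generateFrom
      rintro _ ⟨_, ⟨U, hU, rfl⟩, rfl⟩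
      rw [hpre U hU]
      exact hU
    · intro U hU
      exact TopologicalSpace.isOpen_generateFrom_of_mem ⟨_, ⟨U, hU, rfl⟩, hpre U hU⟩
  exact hHomeo _ _ _ _ hK
    ⟨((Equiv.ofBijective η hη).toHomeomorphOfIsInducing hind).symm⟩
end

section
/- Let X be a topological space, Y a T0 space, and f, g : X → Y continuous maps, and let E(f, g) = {x ∈ X : f(x) = g(x)} carry the subspace topology. If X is sober, then E(f, g) is sober; if X is well-filtered, then E(f, g) is well-filtered; if X is a d-space, then E(f, g) is a d-space. -/
universe u v

open Set

theorem aux_specLE_iff {X : Type*} [TopologicalSpace X] {x y : X} : specLE x y ↔ y ⤳ x :=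
  specializes_iff_mem_closure.symm

theorem aux_specLE_val {X : Type*} [TopologicalSpace X] {p : X → Prop} {x y : {x : X // p x}} :
    specLE x y ↔ specLE (x : X) (y : X) := by
  rw [aux_specLE_iff, aux_specLE_iff, subtype_specializes_iff]

theorem aux_eq {Y : Type*} [TopologicalSpace Y] [T0Space Y] {a b : Y}
    (h : ∀ V : Set Y, IsOpen V → (a ∈ V ↔ b ∈ V)) : a = b :=
  (inseparable_iff_forall_isOpen.2 h).eq

theorem aux_sober {X : Type*} [TopologicalSpace X] {Y : Type*} [TopologicalSpace Y] [T0Space Y]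
    (f g : X → Y) (hf : Continuous f) (hg : Continuous g) (hX : Sober X) :
    Sober {x : X // f x = g x} := by
  intro A hA
  obtain ⟨hne, hcl, hirr⟩ := hA
  have hB : IrredClosed (closure (Subtype.val '' A)) := by
    refine ⟨(hne.image _).closure, isClosed_closure, fun F₁ F₂ h1 h2 h => ?_⟩
    have := hirr (Subtype.val ⁻¹' F₁) (Subtype.val ⁻¹' F₂)
      (h1.preimage continuous_subtype_val) (h2.preimage continuous_subtype_val)
      (fun a ha => h (subset_closure ⟨a, ha, rfl⟩))
    rcases this with h' | h'
    · exact Or.inl (closure_minimal (image_subset_iff.2 h') h1)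
    · exact Or.inr (closure_minimal (image_subset_iff.2 h') h2)
  obtain ⟨x, hx, hux⟩ := hX _ hB
  have key : ∀ W : Set X, IsOpen W → (x ∈ W ↔ ∃ a ∈ A, (a : X) ∈ W) := by
    intro W hW
    constructor
    · intro hxW
      have hxc : x ∈ closure (Subtype.val '' A) := hx ▸ subset_closure rfl
      obtain ⟨_, hyW, a, ha, rfl⟩ := mem_closure_iff.1 hxc W hW hxW
      exact ⟨a, ha, hyW⟩
    · rintro ⟨a, ha, haW⟩
      have : (a : X) ∈ closure {x} := hx ▸ subset_closure ⟨a, ha, rfl⟩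
      exact (specializes_iff_mem_closure.2 this).mem_open hW haW
  have hfg : f x = g x := by
    refine aux_eq fun V hV => ?_
    have h1 := key _ (hV.preimage hf)
    have h2 := key _ (hV.preimage hg)
    simp only [mem_preimage] at h1 h2
    rw [h1, h2]
    exact exists_congr fun a => and_congr_right fun _ => by rw [a.2]
  refine ⟨⟨x, hfg⟩, ?_, ?_⟩
  · ext a
    rw [← hcl.closure_eq, closure_subtype, hx, closure_subtype, image_singleton]
  · intro y hy
    refine Subtype.ext (hux y ?_)
    apply subset_antisymm
    · refine closure_minimal ?_ isClosed_closure
      rintro _ ⟨a, ha, rfl⟩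
      simp only [hy] at ha
      rw [closure_subtype, image_singleton] at ha
      exact ha
    · refine closure_minimal (singleton_subset_iff.2 (subset_closure ⟨y, ?_, rfl⟩)) isClosed_closure
      rw [hy]; exact subset_closure rfl

theorem aux_compact_nhdsKer {X : Type*} [TopologicalSpace X] {K : Set X} (hK : IsCompact K) :
    IsCompact (nhdsKer K) := by
  rw [isCompact_iff_finite_subcover]
  intro ι U hU hsub
  obtain ⟨t, ht⟩ := hK.elim_finite_subcover U hU (subset_nhdsKer.trans hsub)
  exact ⟨t, nhdsKer_minimal ht (isOpen_biUnion fun i _ => hU i)⟩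

theorem aux_wf {X : Type*} [TopologicalSpace X] {Y : Type*} [TopologicalSpace Y] [T0Space Y]
    (f g : X → Y) (hf : Continuous f) (hg : Continuous g) (hX : WellFiltered X) :
    WellFiltered {x : X // f x = g x} := by
  obtain ⟨hT0, hwf⟩ := hX
  refine ⟨inferInstance, ?_⟩
  intro 𝒦 hne h𝒦 hdir U hU hsub
  obtain ⟨V, hV, rfl⟩ := isOpen_induced_iff.1 hU
  by_contra hcon
  push Not at hcon
  let S : Set (Set X) := {C | IsClosed C ∧ ∀ K ∈ 𝒦, ((Subtype.val '' K) ∩ C).Nonempty}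
  have hVS : Vᶜ ∈ S := by
    refine ⟨hV.isClosed_compl, fun K hK => ?_⟩
    obtain ⟨a, ha, haV⟩ := not_subset.1 (hcon K hK)
    exact ⟨a, ⟨a, ha, rfl⟩, haV⟩
  obtain ⟨C, hCV, hmin⟩ := zorn_superset_nonempty S (by
    intro c hc hchain hcne
    refine ⟨⋂₀ c, ⟨isClosed_sInter fun s hs => (hc hs).1, fun K hK => ?_⟩,
      fun s hs => sInter_subset_of_mem hs⟩
    rw [nonempty_iff_ne_empty]
    intro hemp
    have : Nonempty c := hcne.to_subtype
    rw [sInter_eq_iInter] at hemp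
    obtain ⟨i, hi⟩ := ((h𝒦 K hK).2.1.image continuous_subtype_val).elim_directed_family_closed
      (fun i : c => (i : Set X)) (fun i => (hc i.2).1) hemp (by
        intro a b
        rcases hchain.total a.2 b.2 with h | h
        · exact ⟨a, Subset.rfl, h⟩
        · exact ⟨b, h, Subset.rfl⟩)
    exact ((hc i.2).2 K hK).ne_empty hi) _ hVS
  have hCcl : IsClosed C := hmin.prop.1
  have hCK := hmin.prop.2
  -- apply well-filteredness of X
  have hx : ∃ x ∈ C, ∀ K ∈ 𝒦, ∃ k ∈ K, (k : X) ∈ C ∧ x ⤳ (k : X) := by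
    by_contra hno
    push Not at hno
    obtain ⟨_, ⟨K, hK, rfl⟩, hKC⟩ := hwf
      ((fun K : Set {x : X // f x = g x} => nhdsKer (Subtype.val '' K ∩ C)) '' 𝒦) (hne.image _)
      (by
        rintro _ ⟨K, hK, rfl⟩
        refine ⟨(hCK K hK).mono subset_nhdsKer, aux_compact_nhdsKer
          (((h𝒦 K hK).2.1.image continuous_subtype_val).inter_right hCcl), _, ?_, nhdsKer_def _⟩
        exact fun U hU => hU.1)
      (by
        rintro _ ⟨K, hK, rfl⟩ _ ⟨L, hL, rfl⟩
        obtain ⟨M, hM, h1, h2⟩ := hdir K hK L hL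
        exact ⟨_, ⟨M, hM, rfl⟩,
          nhdsKer_subset_nhdsKer (inter_subset_inter_left _ (image_mono h1)),
          nhdsKer_subset_nhdsKer (inter_subset_inter_left _ (image_mono h2))⟩)
      Cᶜ hCcl.isOpen_compl (by
        intro x hx hxC
        obtain ⟨K, hK, hKx⟩ := hno x hxC
        have := hx _ ⟨K, hK, rfl⟩
        obtain ⟨_, ⟨⟨k, hk, rfl⟩, hkC⟩, hxk⟩ := mem_nhdsKer_iff_specializes.1 this
        exact hKx k hk hkC hxk)
    obtain ⟨y, hy⟩ := hCK K hK
    exact hKC (subset_nhdsKer hy) hy.2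
  obtain ⟨x, hxC, hxK⟩ := hx
  have hopen : ∀ W : Set X, IsOpen W → x ∈ W → ∃ K ∈ 𝒦, ∀ k ∈ K, (k : X) ∈ C → (k : X) ∈ W := by
    intro W hW hxW
    by_contra hno
    push Not at hno
    have hS : C ∩ Wᶜ ∈ S := by
      refine ⟨hCcl.inter hW.isClosed_compl, fun K hK => ?_⟩
      obtain ⟨k, hk, hkC, hkW⟩ := hno K hK
      exact ⟨k, ⟨k, hk, rfl⟩, hkC, hkW⟩
    exact (hmin.le_of_le hS inter_subset_left hxC).2 hxW
  have hfg : f x = g x := by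
    refine aux_eq fun W hW => ⟨fun h => ?_, fun h => ?_⟩
    · obtain ⟨K, hK, hKW⟩ := hopen _ (hW.preimage hf) h
      obtain ⟨k, hk, hkC, hxk⟩ := hxK K hK
      have h1 : f k ∈ W := hKW k hk hkC
      rw [k.2] at h1
      exact hxk.mem_open (hW.preimage hg) h1
    · obtain ⟨K, hK, hKW⟩ := hopen _ (hW.preimage hg) h
      obtain ⟨k, hk, hkC, hxk⟩ := hxK K hK
      have h1 : g k ∈ W := hKW k hk hkC
      rw [← k.2] at h1
      exact hxk.mem_open (hW.preimage hf) h1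
  refine hCV hxC (hsub (a := ⟨x, hfg⟩) ?_)
  intro K hK
  obtain ⟨k, hk, -, hxk⟩ := hxK K hK
  obtain ⟨𝒰, h𝒰, hKe⟩ := (h𝒦 K hK).2.2
  rw [hKe] at hk ⊢
  intro O hO
  have hs : (⟨x, hfg⟩ : {x : X // f x = g x}) ⤳ k := (subtype_specializes_iff _ _).2 hxk
  exact hs.mem_open (h𝒰 O hO) (hk O hO)

theorem aux_dspace {X : Type*} [TopologicalSpace X] {Y : Type*} [TopologicalSpace Y] [T0Space Y]
    (f g : X → Y) (hf : Continuous f) (hg : Continuous g) (hX : DSpace X) :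
    DSpace {x : X // f x = g x} := by
  obtain ⟨hT0, hdc, hsc⟩ := hX
  have key : ∀ D : Set {x : X // f x = g x}, D.Nonempty → DirectedOn specLE D →
      ∃ a : {x : X // f x = g x}, specLUB D a ∧
        ∀ V : Set X, IsOpen V → (a : X) ∈ V → ∃ d ∈ D, (d : X) ∈ V := by
    intro D hne hdir
    have hne' : (Subtype.val '' D).Nonempty := hne.image _
    have hdir' : DirectedOn specLE (Subtype.val '' D) := by
      rintro _ ⟨a, ha, rfl⟩ _ ⟨b, hb, rfl⟩
      obtain ⟨c, hc, h1, h2⟩ := hdir a ha b hb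
      exact ⟨c, ⟨c, hc, rfl⟩, aux_specLE_val.1 h1, aux_specLE_val.1 h2⟩
    obtain ⟨a, ha⟩ := hdc _ hne' hdir'
    have hmeet : ∀ V : Set X, IsOpen V → a ∈ V → ∃ d ∈ D, (d : X) ∈ V := by
      intro V hV haV
      obtain ⟨_, ⟨d, hd, rfl⟩, hdV⟩ := (hsc V hV).2 _ hne' hdir' a ha haV
      exact ⟨d, hd, hdV⟩
    have hup : ∀ V : Set X, IsOpen V → ∀ d ∈ D, (d : X) ∈ V → a ∈ V := fun V hV d hd hdV =>
      (aux_specLE_iff.1 (ha.1 d ⟨d, hd, rfl⟩)).mem_open hV hdV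
    have hfg : f a = g a := by
      refine aux_eq fun W hW => ⟨fun h => ?_, fun h => ?_⟩
      · obtain ⟨d, hd, hdW⟩ := hmeet _ (hW.preimage hf) h
        have h1 : f d ∈ W := hdW
        rw [d.2] at h1
        exact hup _ (hW.preimage hg) d hd h1
      · obtain ⟨d, hd, hdW⟩ := hmeet _ (hW.preimage hg) h
        have h1 : g d ∈ W := hdW
        rw [← d.2] at h1
        exact hup _ (hW.preimage hf) d hd h1
    refine ⟨⟨a, hfg⟩, ⟨fun d hd => aux_specLE_val.2 (ha.1 d ⟨d, hd, rfl⟩), fun b hb => ?_⟩, hmeet⟩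
    refine aux_specLE_val.2 (ha.2 b ?_)
    rintro _ ⟨d, hd, rfl⟩
    exact aux_specLE_val.1 (hb d hd)
  refine ⟨inferInstance, fun D hne hdir => ?_, fun U hU => ⟨fun x y hxy hx => ?_, ?_⟩⟩
  · obtain ⟨a, ha, -⟩ := key D hne hdir
    exact ⟨a, ha⟩
  · exact (aux_specLE_iff.1 hxy).mem_open hU hx
  · intro D hne hdir b hb hbU
    obtain ⟨a, ha, hmeet⟩ := key D hne hdir
    have haU : a ∈ U := (aux_specLE_iff.1 (hb.2 a ha.1)).mem_open hU hbU
    obtain ⟨V, hV, rfl⟩ := isOpen_induced_iff.1 hU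
    obtain ⟨d, hd, hdV⟩ := hmeet V hV haU
    exact ⟨d, hd, hdV⟩

/-- Equalizers of continuous maps into a T0 space inherit sobriety,
well-filteredness and the d-space property. -/
theorem stmt5 (X : Type*) [TopologicalSpace X] (Y : Type*) [TopologicalSpace Y] [T0Space Y]
    (f g : X → Y) (hf : Continuous f) (hg : Continuous g) :
    (Sober X → Sober {x : X // f x = g x}) ∧
    (WellFiltered X → WellFiltered {x : X // f x = g x}) ∧
    (DSpace X → DSpace {x : X // f x = g x}) := by
  exact ⟨aux_sober f g hf hg, aux_wf f g hf hg, aux_dspace f g hf hg⟩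
end

section
/- Let 𝐊 be a class of T0 topological spaces such that: every sober space is a 𝐊-space; any space homeomorphic to a 𝐊-space is a 𝐊-space; every 𝐊-space is a d-space; and 𝐊 is adequate. Then the property of being a 𝐊-space is closed-hereditary and saturated-hereditary: if X is a 𝐊-space, then every closed subset of X and every saturated subset of X, equipped with the subspace topology, is a 𝐊-space. -/
universe u v

open Set

/-- In an adequate class, a T0 space whose closed `K`-sets are point closures is a `K`-space. -/
theorem K_of_pointClosures
    (K : (Y : Type u) → TopologicalSpace Y → Prop)
    (hT0 : ∀ (Y : Type u) (tY : TopologicalSpace Y), K Y tY → @T0Space Y tY)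
    (hHomeo : ∀ (Y : Type u) (tY : TopologicalSpace Y) (Z : Type u) (tZ : TopologicalSpace Z),
      K Y tY → Nonempty (@Homeomorph Y Z tY tZ) → K Z tZ)
    (hAdeq : Adequate K)
    (S : Type u) [tS : TopologicalSpace S] [T0Space S]
    (h : ∀ B ∈ KSets K S, ∃ x, B = closure {x}) : K S tS := by
  letI tP := lowerVietoris (KSets K S)
  have hmem : ∀ x : S, closure {x} ∈ KSets K S := by
    intro x
    refine ⟨isClosed_closure, ?_⟩
    intro Y tY hY f hf
    haveI := hT0 Y tY hY
    refine ⟨f x, ?_, ?_⟩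
    · simp only
      rw [closure_image_closure hf, image_singleton]
    · intro y hy
      rw [closure_image_closure hf, image_singleton] at hy
      exact (inseparable_iff_closure_eq.mpr hy).eq.symm
  let g : S → KSets K S := fun x => ⟨closure {x}, hmem x⟩
  have hdia : ∀ (x : S) (U : Set S), IsOpen U → ((closure {x} ∩ U).Nonempty ↔ x ∈ U) := by
    intro x U hU
    rw [closure_inter_open_nonempty_iff hU]
    simp
  have hinj : Function.Injective g := by
    intro x y hxy
    exact (inseparable_iff_closure_eq.mpr (congrArg Subtype.val hxy)).eq
  have hsurj : Function.Surjective g := by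
    rintro ⟨B, hB⟩
    obtain ⟨x, rfl⟩ := h B hB
    exact ⟨x, rfl⟩
  have hind : Topology.IsInducing g := by
    refine ⟨?_⟩
    change tS = TopologicalSpace.induced g (TopologicalSpace.generateFrom _)
    rw [induced_generateFrom_eq]
    apply le_antisymm
    · apply le_generateFrom
      rintro _ ⟨_, ⟨U, hU, rfl⟩, rfl⟩
      have : g ⁻¹' {A : KSets K S | ((A : Set S) ∩ U).Nonempty} = U := by
        ext x; exact hdia x U hU
      rw [this]; exact hU
    · intro U hU
      apply TopologicalSpace.isOpen_generateFrom_of_mem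
      refine ⟨_, ⟨U, hU, rfl⟩, ?_⟩
      ext x; exact hdia x U hU
  exact hHomeo _ tP _ tS (hAdeq S tS inferInstance)
    ⟨((Equiv.ofBijective g ⟨hinj, hsurj⟩).toHomeomorphOfIsInducing hind).symm⟩

/-- A subspace of a `K`-space containing every generic point of the closure in `X` of each of
its closed `K`-sets is a `K`-space. -/
theorem K_subspace
    (K : (Y : Type u) → TopologicalSpace Y → Prop)
    (hT0 : ∀ (Y : Type u) (tY : TopologicalSpace Y), K Y tY → @T0Space Y tY)
    (hHomeo : ∀ (Y : Type u) (tY : TopologicalSpace Y) (Z : Type u) (tZ : TopologicalSpace Z),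
      K Y tY → Nonempty (@Homeomorph Y Z tY tZ) → K Z tZ)
    (hAdeq : Adequate K)
    (X : Type u) [tX : TopologicalSpace X] (hX : K X tX) (A : Set X)
    (h : ∀ (B : Set A) (x : X), closure (Subtype.val '' B) = closure {x} → x ∈ A) :
    K ↥A inferInstance := by
  haveI := hT0 X tX hX
  refine K_of_pointClosures K hT0 hHomeo hAdeq A ?_
  rintro B ⟨hBc, hBK⟩
  obtain ⟨x, hx, -⟩ := hBK X tX hX Subtype.val continuous_subtype_val
  have hxA := h B x hx
  refine ⟨⟨x, hxA⟩, ?_⟩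
  have h1 := Topology.IsInducing.subtypeVal.closure_eq_preimage_closure_image B
  have h2 := Topology.IsInducing.subtypeVal.closure_eq_preimage_closure_image
    ({⟨x, hxA⟩} : Set A)
  rw [image_singleton] at h2
  rw [← hBc.closure_eq, h1, h2, hx]

/-- If `K` is an adequate class of T0 spaces containing all sober spaces,
closed under homeomorphisms and contained in the d-spaces, then the property of being a
`𝐊`-space is closed-hereditary and saturated-hereditary. -/
theorem stmt6
    (K : (Y : Type u) → TopologicalSpace Y → Prop)
    (hT0 : ∀ (Y : Type u) (tY : TopologicalSpace Y), K Y tY → @T0Space Y tY)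
    (hSober : ∀ (Y : Type u) (tY : TopologicalSpace Y), @Sober Y tY → K Y tY)
    (hHomeo : ∀ (Y : Type u) (tY : TopologicalSpace Y) (Z : Type u) (tZ : TopologicalSpace Z),
      K Y tY → Nonempty (@Homeomorph Y Z tY tZ) → K Z tZ)
    (hD : ∀ (Y : Type u) (tY : TopologicalSpace Y), K Y tY → @DSpace Y tY)
    (hAdeq : Adequate K)
    (X : Type u) [tX : TopologicalSpace X] (hX : K X tX) :
    (∀ C : Set X, IsClosed C → K ↥C inferInstance) ∧
    (∀ A : Set X, Saturated A → K ↥A inferInstance) := by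
  refine ⟨fun C hC => ?_, fun A hA => ?_⟩
  · refine K_subspace K hT0 hHomeo hAdeq X hX C ?_
    intro B x hx
    have hx1 : x ∈ closure (Subtype.val '' B) := hx ▸ subset_closure rfl
    refine closure_minimal ?_ hC hx1
    rintro _ ⟨b, -, rfl⟩
    exact b.2
  · refine K_subspace K hT0 hHomeo hAdeq X hX A ?_
    intro B x hx
    have hx1 : x ∈ closure (Subtype.val '' B) := hx ▸ subset_closure rfl
    obtain ⟨_, b, hb, rfl⟩ := closure_nonempty_iff.mp ⟨x, hx1⟩
    have hbx : (b : X) ∈ closure {x} := hx ▸ subset_closure ⟨b, hb, rfl⟩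
    obtain ⟨𝒰, h𝒰, hAe⟩ := hA
    have hbA : (b : X) ∈ ⋂₀ 𝒰 := hAe.subset b.2
    apply hAe.symm.subset
    intro U hU
    obtain ⟨y, hyU, rfl⟩ := mem_closure_iff.mp hbx U (h𝒰 U hU) (hbA U hU)
    exact hyU
end

section
/- Let X be a topological space and let A be either a closed subset or a saturated subset of X, equipped with the subspace topology. If X is sober, then A is sober; if X is well-filtered, then A is well-filtered; if X is a d-space, then A is a d-space. -/
universe u v

open Set

theorem s7_spec_iff {X : Type*} [TopologicalSpace X] {A : Set X} (x y : A) :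
    specLE x y ↔ specLE (x : X) (y : X) := by
  unfold specLE
  rw [closure_subtype, image_singleton]

theorem s7_open_up {X : Type*} [TopologicalSpace X] {U : Set X} (hU : IsOpen U) {x y : X}
    (h : specLE x y) (hx : x ∈ U) : y ∈ U := by
  obtain ⟨z, hz, hz'⟩ := mem_closure_iff.1 h U hU hx
  rw [mem_singleton_iff] at hz'
  exact hz' ▸ hz

theorem s7_sat_up {X : Type*} [TopologicalSpace X] {U : Set X} (hU : Saturated U) {x y : X}
    (h : specLE x y) (hx : x ∈ U) : y ∈ U := by
  obtain ⟨S, hS, rfl⟩ := hU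
  exact fun V hV => s7_open_up (hS V hV) h (hx V hV)

theorem s7_specLE_refl {X : Type*} [TopologicalSpace X] (x : X) : specLE x x :=
  subset_closure rfl

theorem s7_specLE_trans {X : Type*} [TopologicalSpace X] {x y z : X} (h : specLE x y)
    (h' : specLE y z) : specLE x z :=
  closure_minimal (Set.singleton_subset_iff.mpr h') isClosed_closure h

theorem s7_sober {X : Type*} [TopologicalSpace X] (A : Set X)
    (hA : IsClosed A ∨ Saturated A) (h : Sober X) : Sober ↥A := by
  rintro B ⟨hne, hcl, hirr⟩
  have hC : IrredClosed (closure (Subtype.val '' B)) := by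
    refine ⟨(hne.image _).closure, isClosed_closure, fun F₁ F₂ h1 h2 h12 => ?_⟩
    have := hirr (Subtype.val ⁻¹' F₁) (Subtype.val ⁻¹' F₂)
      (h1.preimage continuous_subtype_val) (h2.preimage continuous_subtype_val)
      (fun b hb => h12 (subset_closure (mem_image_of_mem _ hb)))
    rcases this with h | h
    · exact Or.inl (closure_minimal (image_subset_iff.2 h) h1)
    · exact Or.inr (closure_minimal (image_subset_iff.2 h) h2)
  obtain ⟨x, hx, -⟩ := h _ hC
  have hxA : x ∈ A := by
    rcases hA with hA | hA
    · have : closure (Subtype.val '' B) ⊆ A := closure_minimal (by rintro _ ⟨b, _, rfl⟩; exact b.2) hA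
      exact this (hx ▸ subset_closure rfl)
    · obtain ⟨b, hb⟩ := hne
      have : specLE (b : X) x := by
        unfold specLE
        rw [← hx]
        exact subset_closure (mem_image_of_mem _ hb)
      exact s7_sat_up hA this b.2
  have key : B = closure {(⟨x, hxA⟩ : A)} := by
    ext z
    rw [closure_subtype, image_singleton, ← hx, ← closure_subtype, hcl.closure_eq]
  refine ⟨⟨x, hxA⟩, key, fun y hy => ?_⟩
  have hyx : closure {(y : X)} = closure {x} := by
    have e := hy.symm.trans key
    apply subset_antisymm
    · refine closure_minimal (singleton_subset_iff.2 ?_) isClosed_closure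
      exact (s7_spec_iff y ⟨x, hxA⟩).1 (show y ∈ closure _ from e ▸ subset_closure rfl)
    · refine closure_minimal (singleton_subset_iff.2 ?_) isClosed_closure
      exact (s7_spec_iff ⟨x, hxA⟩ y).1
        (show _ ∈ closure _ from e ▸ subset_closure rfl)
  exact Subtype.ext ((h _ hC).unique (hx.trans hyx.symm) hx)

theorem s7_wf {X : Type*} [TopologicalSpace X] (A : Set X)
    (hA : IsClosed A ∨ Saturated A) (h : WellFiltered X) : WellFiltered ↥A := by
  obtain ⟨hT, hW⟩ := h
  refine ⟨inferInstance, fun K hKne hK hdir U hU hKU => ?_⟩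
  obtain ⟨V, hV, rfl⟩ := isOpen_induced_iff.1 hU
  let up : Set A → Set X := fun k => {x | ∃ a ∈ k, specLE (a : X) x}
  have hsub : ∀ k (a : A), a ∈ k → (a : X) ∈ up k := fun k a ha => ⟨a, ha, s7_specLE_refl _⟩
  have hupo : ∀ k (O : Set X), IsOpen O → Subtype.val '' k ⊆ O → up k ⊆ O := by
    rintro k O hO hk x ⟨a, ha, hax⟩
    exact s7_open_up hO hax (hk (mem_image_of_mem _ ha))
  have hup : ∀ k ∈ K, (up k).Nonempty ∧ IsCompact (up k) ∧ Saturated (up k) := by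
    intro k hk
    obtain ⟨⟨a, ha⟩, hc, -⟩ := hK k hk
    refine ⟨⟨a, hsub k a ha⟩, ?_, {O | IsOpen O ∧ up k ⊆ O}, fun O hO => hO.1, ?_⟩
    · have hc' : IsCompact (Subtype.val '' k) := hc.image continuous_subtype_val
      refine isCompact_of_finite_subcover fun {ι} O hO hcov => ?_
      obtain ⟨t, ht⟩ := hc'.elim_finite_subcover O hO
        (Subset.trans (by rintro _ ⟨a, ha, rfl⟩; exact hsub k a ha) hcov)
      exact ⟨t, hupo k _ (isOpen_biUnion fun i _ => hO i) ht⟩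
    · apply subset_antisymm
      · exact fun x hx O hO => hO.2 hx
      · intro x hx
        by_contra hxn
        have : x ∈ (closure {x})ᶜ := by
          refine hx _ ⟨isClosed_closure.isOpen_compl, ?_⟩
          rintro y ⟨a, ha, hay⟩ hyx
          exact hxn ⟨a, ha, s7_specLE_trans hay hyx⟩
        exact this (subset_closure rfl)
  have hinA : ∀ x ∈ A, x ∈ ⋂₀ (up '' K) → x ∈ V := by
    intro x hxA hx
    refine hKU (a := ⟨x, hxA⟩) fun k hk => ?_
    obtain ⟨a, ha, hax⟩ := hx _ (mem_image_of_mem _ hk)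
    exact s7_sat_up (hK k hk).2.2 ((s7_spec_iff a ⟨x, hxA⟩).2 hax) ha
  have main : ∃ W : Set X, IsOpen W ∧ ⋂₀ (up '' K) ⊆ W ∧ W ∩ A ⊆ V := by
    rcases hA with hA | hA
    · refine ⟨V ∪ Aᶜ, hV.union hA.isOpen_compl, fun x hx => ?_, ?_⟩
      · by_cases hxA : x ∈ A
        · exact Or.inl (hinA x hxA hx)
        · exact Or.inr hxA
      · rintro x ⟨hx | hx, hxA⟩
        · exact hx
        · exact absurd hxA hx
    · refine ⟨V, hV, fun x hx => hinA x ?_ hx, inter_subset_left⟩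
      obtain ⟨k, hk⟩ := hKne
      obtain ⟨a, ha, hax⟩ := hx _ (mem_image_of_mem _ hk)
      exact s7_sat_up hA hax a.2
  obtain ⟨W, hWo, hKW, hWV⟩ := main
  obtain ⟨_, ⟨k, hk, rfl⟩, hkW⟩ := hW (up '' K) (hKne.image _)
    (by rintro _ ⟨k, hk, rfl⟩; exact hup k hk)
    (by
      rintro _ ⟨k, hk, rfl⟩ _ ⟨l, hl, rfl⟩
      obtain ⟨m, hm, hmk, hml⟩ := hdir k hk l hl
      exact ⟨up m, mem_image_of_mem _ hm, fun x ⟨a, ha, hax⟩ => ⟨a, hmk ha, hax⟩,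
        fun x ⟨a, ha, hax⟩ => ⟨a, hml ha, hax⟩⟩)
    W hWo hKW
  exact ⟨k, hk, fun a ha => hWV ⟨hkW (hsub k a ha), a.2⟩⟩

theorem s7_d {X : Type*} [TopologicalSpace X] (A : Set X)
    (hA : IsClosed A ∨ Saturated A) (h : DSpace X) : DSpace ↥A := by
  obtain ⟨hT, hdc, hS⟩ := h
  have himg : ∀ D : Set A, DirectedOn specLE D →
      DirectedOn specLE ((Subtype.val : A → X) '' D) := by
    rintro D hdir _ ⟨a, ha, rfl⟩ _ ⟨b, hb, rfl⟩
    obtain ⟨c, hc, hac, hbc⟩ := hdir a ha b hb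
    exact ⟨c, mem_image_of_mem _ hc, (s7_spec_iff _ _).1 hac, (s7_spec_iff _ _).1 hbc⟩
  have key : ∀ D : Set A, D.Nonempty → DirectedOn specLE D →
      ∃ a : A, specLUB ((Subtype.val : A → X) '' D) (a : X) ∧ specLUB D a := by
    intro D hne hdir
    obtain ⟨a, ha⟩ := hdc _ (hne.image _) (himg D hdir)
    have haA : a ∈ A := by
      rcases hA with hA | hA
      · by_contra haA
        obtain ⟨_, ⟨d, _, rfl⟩, hd⟩ :=
          (hS Aᶜ hA.isOpen_compl).2 _ (hne.image _) (himg D hdir) a ha haA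
        exact hd d.2
      · obtain ⟨d, hd⟩ := hne
        exact s7_sat_up hA (ha.1 d (mem_image_of_mem _ hd)) d.2
    refine ⟨⟨a, haA⟩, ha, fun d hd => (s7_spec_iff _ _).2 (ha.1 d (mem_image_of_mem _ hd)),
      fun b hb => (s7_spec_iff _ _).2 (ha.2 b ?_)⟩
    rintro _ ⟨d, hd, rfl⟩
    exact (s7_spec_iff _ _).1 (hb d hd)
  refine ⟨inferInstance, fun D hne hdir => ?_, fun U hU => ⟨fun x y hxy hx =>
    s7_open_up hU hxy hx, fun D hne hdir b hb hbU => ?_⟩⟩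
  · obtain ⟨a, -, ha⟩ := key D hne hdir
    exact ⟨a, ha⟩
  · obtain ⟨a, ha, ha'⟩ := key D hne hdir
    have haU : a ∈ U := s7_open_up hU (hb.2 a ha'.1) hbU
    obtain ⟨V, hV, rfl⟩ := isOpen_induced_iff.1 hU
    obtain ⟨_, ⟨d, hd, rfl⟩, hdV⟩ := (hS V hV).2 _ (hne.image _) (himg D hdir) a ha haU
    exact ⟨d, hd, hdV⟩

/-- Closed subsets and saturated subsets (with the subspace topology)
inherit sobriety, well-filteredness and the d-space property. -/
theorem stmt7 (X : Type*) [TopologicalSpace X] (A : Set X)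
    (hA : IsClosed A ∨ Saturated A) :
    (Sober X → Sober ↥A) ∧
    (WellFiltered X → WellFiltered ↥A) ∧
    (DSpace X → DSpace ↥A) := by
  exact ⟨s7_sober A hA, s7_wf A hA, s7_d A hA⟩
end

section
/- Let 𝐊 be a class of T0 topological spaces such that: every sober space is a 𝐊-space; any space homeomorphic to a 𝐊-space is a 𝐊-space; every 𝐊-space is a d-space; and 𝐊 is adequate. Let X be a T0 space and consider: (1) Σ 𝐊(X), the set 𝐊(X) ordered by inclusion with the Scott topology, is a 𝐊-space; (2) the map η : X → Σ 𝐊(X), η(x) = closure({x}), is continuous; (3) the 𝐊-reflection of X exists and is a Scott space, i.e. there exist a poset Q and a continuous map ξ : X → Σ Q such that Σ Q is a 𝐊-space and ⟨Σ Q, ξ⟩ is a 𝐊-reflection of X. Then (1) and (2) together imply (3), in which case ⟨Σ 𝐊(X), η⟩ itself is a 𝐊-reflection of X; and (3) implies (1). -/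
universe u v

open Set

theorem aux_closure_mem
    (K : (Y : Type u) → TopologicalSpace Y → Prop)
    (hT0 : ∀ (Y : Type u) (tY : TopologicalSpace Y), K Y tY → @T0Space Y tY)
    (X : Type u) [tX : TopologicalSpace X] (x : X) : closure ({x} : Set X) ∈ KSets K X := by
  refine ⟨isClosed_closure, ?_⟩
  intro Y tY hK f hf
  haveI := hT0 Y tY hK
  have h : closure (f '' closure {x}) = closure {f x} := by
    rw [closure_image_closure hf, Set.image_singleton]
  refine ⟨f x, h, fun y hy => ?_⟩
  have hy' : closure (f '' closure {x}) = closure {y} := hy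
  exact (inseparable_iff_closure_eq.mpr (hy'.symm.trans h)).eq

theorem aux_scott_spec (P : Type u) [Preorder P] (a b : P) :
    a ∈ @closure P (scottTop P) {b} ↔ a ≤ b := by
  letI := scottTop P
  constructor
  · intro h
    have hc : IsClosed (Set.Iic b) := by
      rw [← isOpen_compl_iff]
      refine ⟨?_, ?_⟩
      · intro c d hcd hc hd
        exact hc (le_trans hcd hd)
      · intro D hne hdir s hs hsb
        by_contra hcon
        apply hsb
        refine hs.2 ?_
        intro d hd
        by_contra hdb
        exact hcon ⟨d, hd, hdb⟩
    exact closure_minimal (Set.singleton_subset_iff.mpr (Set.mem_Iic.mpr le_rfl)) hc h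
  · intro h
    rw [mem_closure_iff]
    intro o ho ha
    have ho' : IsScottOpen o := ho
    exact ⟨b, ho'.1 h ha, rfl⟩

theorem aux_viet_spec {X : Type u} [TopologicalSpace X] (G : Set (Set X))
    (hG : ∀ A ∈ G, IsClosed A) (A B : ↥G) :
    A ∈ @closure _ (lowerVietoris G) {B} ↔ A ≤ B := by
  letI := lowerVietoris G
  constructor
  · intro h a ha
    by_contra hb
    have ho : IsOpen {C : ↥G | ((C : Set X) ∩ (B : Set X)ᶜ).Nonempty} :=
      TopologicalSpace.isOpen_generateFrom_of_mem ⟨_, (hG _ B.2).isOpen_compl, rfl⟩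
    rw [mem_closure_iff] at h
    obtain ⟨C, hC, rfl⟩ := h _ ho ⟨a, ha, hb⟩
    obtain ⟨c, hc1, hc2⟩ := hC
    exact hc2 hc1
  · intro h
    rw [mem_closure_iff]
    intro o ho ha
    suffices B ∈ o from ⟨B, this, rfl⟩
    have ho' : TopologicalSpace.GenerateOpen _ o := ho
    clear ho
    induction ho' with
    | basic s hs =>
      obtain ⟨U, hU, rfl⟩ := hs
      obtain ⟨a, ha1, ha2⟩ := ha
      exact ⟨a, h ha1, ha2⟩
    | univ => trivial
    | inter s t _ _ ihs iht => exact ⟨ihs ha.1, iht ha.2⟩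
    | sUnion S _ ih =>
      obtain ⟨s, hs, has⟩ := ha
      exact ⟨s, hs, ih s hs has⟩

theorem aux_reflection
    (K : (Y : Type u) → TopologicalSpace Y → Prop)
    (hT0 : ∀ (Y : Type u) (tY : TopologicalSpace Y), K Y tY → @T0Space Y tY)
    (X : Type u) [tX : TopologicalSpace X]
    (η : X → ↥(KSets K X)) (hη : ∀ x : X, (η x : Set X) = closure ({x} : Set X))
    (t : TopologicalSpace ↥(KSets K X)) (hK : K _ t)
    (hspec : ∀ A B : ↥(KSets K X), A ∈ closure {B} ↔ A ≤ B)
    (hfine : ∀ U : Set X, IsOpen U → IsOpen {A : ↥(KSets K X) | ((A : Set X) ∩ U).Nonempty})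
    (hcont : Continuous η) : IsKReflection K X tX ↥(KSets K X) t η := by
  refine ⟨hK, hcont, ?_⟩
  intro Y tY hY f hf
  haveI := hT0 Y tY hY
  have hle : ∀ (A : ↥(KSets K X)), ∀ a ∈ (A : Set X), η a ≤ A := by
    intro A a ha
    show (η a : Set X) ⊆ A
    rw [hη]
    exact closure_minimal (Set.singleton_subset_iff.mpr ha) A.2.1
  have hcl : ∀ A : ↥(KSets K X), A ∈ closure (η '' (A : Set X)) := by
    intro A
    obtain ⟨B, hB, -⟩ := A.2.2 _ t hK η hcont
    have hB' : closure (η '' (A : Set X)) = closure {B} := hB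
    rw [hB', hspec]
    intro a ha
    have h1 : η a ∈ closure {B} := hB' ▸ subset_closure ⟨a, ha, rfl⟩
    rw [hspec] at h1
    apply h1
    rw [hη]
    exact subset_closure rfl
  have key : ∀ A : ↥(KSets K X), ∃ y : Y, closure (f '' (A : Set X)) = closure {y} :=
    fun A => (A.2.2 Y tY hY f hf).exists
  choose g hg using key
  refine ⟨g, ⟨?_, ?_⟩, ?_⟩
  · rw [continuous_def]
    intro V hV
    convert hfine _ (hV.preimage hf) using 1
    ext A
    constructor
    · intro hA
      have h1 : g A ∈ closure (f '' (A : Set X)) := by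
        rw [hg]; exact subset_closure rfl
      rw [mem_closure_iff] at h1
      obtain ⟨_, h2, a, ha, rfl⟩ := h1 V hV hA
      exact ⟨a, ha, h2⟩
    · rintro ⟨a, ha, hav⟩
      have h1 : f a ∈ closure {g A} := hg A ▸ subset_closure ⟨a, ha, rfl⟩
      rw [mem_closure_iff] at h1
      obtain ⟨_, h2, rfl⟩ := h1 V hV hav
      exact h2
  · funext x
    have h1 : closure {g (η x)} = closure {f x} := by
      rw [← hg, hη, closure_image_closure hf, Set.image_singleton]
    exact (inseparable_iff_closure_eq.mpr h1).eq
  · rintro g' ⟨hg'c, hg'⟩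
    funext A
    have h1 : closure {g' A} = closure {g A} := by
      rw [← hg]
      apply subset_antisymm
      · refine closure_minimal (Set.singleton_subset_iff.mpr ?_) isClosed_closure
        have h2 := image_closure_subset_closure_image hg'c (Set.mem_image_of_mem g' (hcl A))
        rwa [← Set.image_comp, hg'] at h2
      · refine closure_minimal ?_ isClosed_closure
        rintro _ ⟨a, ha, rfl⟩
        have h2 := image_closure_subset_closure_image hg'c
          (Set.mem_image_of_mem g' ((hspec _ _).mpr (hle A a ha)))
        rw [Set.image_singleton] at h2
        rw [← hg']
        exact h2
    exact (inseparable_iff_closure_eq.mpr h1).eq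

theorem aux_viet_le_scott {X : Type u} [TopologicalSpace X] (G : Set (Set X))
    (hG : ∀ A ∈ G, IsClosed A) (hd : @DSpace _ (lowerVietoris G)) (U : Set ↥G)
    (hU : @IsOpen _ (lowerVietoris G) U) : IsScottOpen U := by
  letI := lowerVietoris G
  have hs : ∀ A B : ↥G, specLE A B ↔ A ≤ B := aux_viet_spec G hG
  obtain ⟨h1, h2⟩ := hd.2.2 U hU
  refine ⟨fun a b hab ha => h1 a b ((hs _ _).mpr hab) ha, ?_⟩
  intro D hne hdir a ha haU
  refine h2 D hne ?_ a ⟨?_, ?_⟩ haU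
  · intro x hx y hy
    obtain ⟨z, hz, hxz, hyz⟩ := hdir x hx y hy
    exact ⟨z, hz, (hs _ _).mpr hxz, (hs _ _).mpr hyz⟩
  · exact fun d hd => (hs _ _).mpr (ha.1 hd)
  · exact fun b hb => (hs _ _).mpr (ha.2 fun d hd => (hs _ _).mp (hb d hd))

/-- Conditions for the `𝐊`-reflection of a T0 space `X` to be a Scott space:
if `Σ 𝐊(X)` is a `𝐊`-space (1) and `η : X → Σ 𝐊(X)`, `η x = closure {x}`, is continuous (2),
then `⟨Σ 𝐊(X), η⟩` is a `𝐊`-reflection of `X` (so the `𝐊`-reflection of `X` exists and is a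
Scott space (3)); conversely (3) implies (1). -/
theorem stmt8
    (K : (Y : Type u) → TopologicalSpace Y → Prop)
    (hT0 : ∀ (Y : Type u) (tY : TopologicalSpace Y), K Y tY → @T0Space Y tY)
    (hSober : ∀ (Y : Type u) (tY : TopologicalSpace Y), @Sober Y tY → K Y tY)
    (hHomeo : ∀ (Y : Type u) (tY : TopologicalSpace Y) (Z : Type u) (tZ : TopologicalSpace Z),
      K Y tY → Nonempty (@Homeomorph Y Z tY tZ) → K Z tZ)
    (hD : ∀ (Y : Type u) (tY : TopologicalSpace Y), K Y tY → @DSpace Y tY)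
    (hAdeq : Adequate K)
    (X : Type u) [tX : TopologicalSpace X] [T0Space X] :
    (∀ x : X, closure ({x} : Set X) ∈ KSets K X) ∧
    ∀ η : X → ↥(KSets K X), (∀ x : X, (η x : Set X) = closure ({x} : Set X)) →
      ((K ↥(KSets K X) (scottTop ↥(KSets K X)) ∧
          @Continuous X ↥(KSets K X) tX (scottTop ↥(KSets K X)) η) →
        (IsKReflection K X tX ↥(KSets K X) (scottTop ↥(KSets K X)) η ∧
          ∃ (Q : Type u) (pQ : PartialOrder Q) (ξ : X → Q),
            IsKReflection K X tX Q (@scottTop Q pQ.toPreorder) ξ)) ∧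
      ((∃ (Q : Type u) (pQ : PartialOrder Q) (ξ : X → Q),
            IsKReflection K X tX Q (@scottTop Q pQ.toPreorder) ξ) →
        K ↥(KSets K X) (scottTop ↥(KSets K X))) := by
  refine ⟨aux_closure_mem K hT0 X, ?_⟩
  intro η hη
  have hG : ∀ A ∈ KSets K X, IsClosed A := fun A hA => hA.1
  have hKV : K ↥(KSets K X) (lowerVietoris (KSets K X)) := hAdeq X tX inferInstance
  have hVS := aux_viet_le_scott (KSets K X) hG (hD _ _ hKV)
  have hdia : ∀ U : Set X, IsOpen U →
      @IsOpen _ (lowerVietoris (KSets K X)) {A : ↥(KSets K X) | ((A : Set X) ∩ U).Nonempty} :=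
    fun U hU => TopologicalSpace.isOpen_generateFrom_of_mem ⟨U, hU, rfl⟩
  constructor
  · rintro ⟨h1, h2⟩
    have h3 := aux_reflection K hT0 X η hη (scottTop _) h1 (aux_scott_spec _)
      (fun U hU => hVS _ (hdia U hU)) h2
    exact ⟨h3, _, inferInstance, η, h3⟩
  · rintro ⟨Q, pQ, ξ, hQ, hξ, hQu⟩
    have hcont : @Continuous X _ tX (lowerVietoris (KSets K X)) η := by
      refine continuous_generateFrom_iff.mpr ?_
      rintro _ ⟨U, hU, rfl⟩
      convert hU using 1
      ext x
      constructor
      · rintro ⟨a, ha, haU⟩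
        rw [hη, mem_closure_iff] at ha
        obtain ⟨_, h, rfl⟩ := ha U hU haU
        exact h
      · intro hx
        exact ⟨x, by rw [hη]; exact subset_closure rfl, hx⟩
    obtain ⟨-, -, hVu⟩ := aux_reflection K hT0 X η hη (lowerVietoris _) hKV
      (aux_viet_spec _ hG) hdia hcont
    letI tV := lowerVietoris (KSets K X)
    letI tQ := @scottTop Q pQ.toPreorder
    obtain ⟨g, ⟨hgc, hg⟩, -⟩ := hVu Q tQ hQ ξ hξ
    obtain ⟨h, ⟨hhc, hh⟩, -⟩ := hQu _ tV hKV η hcont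
    have hhg : h ∘ g = id := (hVu _ tV hKV η hcont).unique
      ⟨hhc.comp hgc, by rw [Function.comp_assoc, hg, hh]⟩ ⟨continuous_id, rfl⟩
    have hgh : g ∘ h = id := (hQu _ tQ hQ ξ hξ).unique
      ⟨hgc.comp hhc, by rw [Function.comp_assoc, hh, hg]⟩ ⟨continuous_id, rfl⟩
    have hhg' : ∀ A, h (g A) = A := congrFun hhg
    have hgh' : ∀ q, g (h q) = q := congrFun hgh
    have hgm : Monotone g := by
      intro A B hAB
      have h2 := image_closure_subset_closure_image hgc
        (Set.mem_image_of_mem g ((aux_viet_spec _ hG A B).mpr hAB))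
      rw [Set.image_singleton] at h2
      exact (aux_scott_spec Q _ _).mp h2
    have hhm : Monotone h := by
      intro p q hpq
      have h2 := image_closure_subset_closure_image hhc
        (Set.mem_image_of_mem h ((aux_scott_spec Q p q).mpr hpq))
      rw [Set.image_singleton] at h2
      exact (aux_viet_spec _ hG _ _).mp h2
    have htop : lowerVietoris (KSets K X) = scottTop ↥(KSets K X) := by
      refine TopologicalSpace.ext_iff.mpr fun U => ⟨hVS U, ?_⟩
      intro hU
      have hU' : IsScottOpen U := hU
      have hpre : IsOpen (h ⁻¹' U) := by
        refine ⟨fun p q hpq hp => hU'.1 (hhm hpq) hp, ?_⟩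
        intro D hne hdir a ha haU
        have hdir2 : DirectedOn (· ≤ ·) (h '' D) := by
          rintro _ ⟨x, hx, rfl⟩ _ ⟨y, hy, rfl⟩
          obtain ⟨z, hz, hxz, hyz⟩ := hdir x hx y hy
          exact ⟨h z, ⟨z, hz, rfl⟩, hhm hxz, hhm hyz⟩
        have hlub : IsLUB (h '' D) (h a) := by
          refine ⟨?_, ?_⟩
          · rintro _ ⟨x, hx, rfl⟩
            exact hhm (ha.1 hx)
          · intro B hB
            have : a ≤ g B := ha.2 fun d hd => by
              have := hgm (hB ⟨d, hd, rfl⟩)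
              rwa [hgh'] at this
            have := hhm this
            rwa [hhg'] at this
        obtain ⟨_, ⟨d, hd, rfl⟩, hdU⟩ := hU'.2 (h '' D) (hne.image h) hdir2 (h a) hlub haU
        exact ⟨d, hd, hdU⟩
      have h4 : IsOpen (g ⁻¹' (h ⁻¹' U)) := hpre.preimage hgc
      rw [← Set.preimage_comp, hhg, Set.preimage_id] at h4
      exact h4
    rw [← htop]
    exact hKV
end

section
/- Let 𝐊 be a class of T0 topological spaces such that: every sober space is a 𝐊-space; any space homeomorphic to a 𝐊-space is a 𝐊-space; every 𝐊-space is a d-space; and 𝐊 is adequate. Then for any poset P the following are equivalent: (1) Σ 𝐊(Σ P), the set 𝐊(Σ P) ordered by inclusion with the Scott topology, is a 𝐊-space; (2) the 𝐊-reflection of Σ P exists and is a Scott space, i.e. there exist a poset Q and a continuous map ξ : Σ P → Σ Q such that Σ Q is a 𝐊-space and ⟨Σ Q, ξ⟩ is a 𝐊-reflection of Σ P. Moreover, when (1) holds, ⟨Σ 𝐊(Σ P), η⟩ with η(x) = ↓x (the Scott closure of {x}) is a 𝐊-reflection of Σ P. -/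
universe u v

open Set

set_option linter.style.haveILetI false

section Helpers

open scoped Topology

variable {K : (Y : Type u) → TopologicalSpace Y → Prop}

theorem scott_isOpen_iff {P : Type*} [Preorder P] (U : Set P) :
    IsOpen[scottTop P] U ↔ IsScottOpen U := Iff.rfl

theorem scott_isClosed_Iic {P : Type*} [Preorder P] (x : P) :
    IsClosed[scottTop P] {p : P | p ≤ x} := by
  letI := scottTop P
  rw [← isOpen_compl_iff]
  refine ⟨fun a b hab ha hb => ha (le_trans hab hb), ?_⟩
  intro D _ _ a ha hax
  by_contra hcon
  refine hax (ha.2 ?_)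
  intro d hd
  by_contra h
  exact hcon ⟨d, hd, h⟩

theorem scott_closure_singleton {P : Type*} [Preorder P] (x : P) :
    @closure P (scottTop P) {x} = {p : P | p ≤ x} := by
  letI := scottTop P
  apply subset_antisymm
  · exact closure_minimal (by simp) (scott_isClosed_Iic x)
  · intro p hp
    rw [mem_closure_iff]
    intro U hU hpU
    exact ⟨x, hU.1 hp hpU, rfl⟩

theorem scott_t0 (P : Type*) [PartialOrder P] : @T0Space P (scottTop P) := by
  letI := scottTop P
  rw [t0Space_iff_inseparable]
  intro x y h
  rw [inseparable_iff_closure_eq, scott_closure_singleton, scott_closure_singleton] at h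
  apply le_antisymm
  · have : x ∈ {p | p ≤ y} := by rw [← h]; exact le_refl x
    exact this
  · have : y ∈ {p | p ≤ x} := by rw [h]; exact le_refl y
    exact this

theorem closure_sing_mem_KSets
    (hT0 : ∀ (Y : Type u) (tY : TopologicalSpace Y), K Y tY → @T0Space Y tY)
    {X : Type u} [TopologicalSpace X] (x : X) : closure ({x} : Set X) ∈ KSets K X := by
  refine ⟨isClosed_closure, ?_⟩
  intro Y tY hY f hf
  have := hT0 Y tY hY
  have e : closure (f '' closure {x}) = closure {f x} := by
    rw [closure_image_closure hf, image_singleton]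
  refine ⟨f x, e, ?_⟩
  intro y hy
  have hy' : closure (f '' closure {x}) = closure {y} := hy
  exact ((inseparable_iff_closure_eq.2 (e.symm.trans hy')).eq).symm

theorem vietoris_isOpen {X : Type*} [TopologicalSpace X] (G : Set (Set X)) {U : Set X}
    (hU : IsOpen U) : IsOpen[lowerVietoris G] {A : ↥G | ((A : Set X) ∩ U).Nonempty} :=
  TopologicalSpace.GenerateOpen.basic _ ⟨U, hU, rfl⟩

theorem vietoris_spec {X : Type u} [TopologicalSpace X] (A B : ↥(KSets K X)) :
    A ∈ @closure _ (lowerVietoris (KSets K X)) {B} ↔ A ≤ B := by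
  letI := lowerVietoris (KSets K X)
  constructor
  · intro h x hx
    by_contra hxB
    rw [mem_closure_iff] at h
    obtain ⟨C, hC, rfl⟩ := h _ (vietoris_isOpen (KSets K X) B.2.1.isOpen_compl) ⟨x, hx, hxB⟩
    obtain ⟨z, hz, hz'⟩ := hC
    exact hz' hz
  · intro h
    have : B ⤳ A := by
      rw [specializes_iff_pure]
      show _ ≤ @nhds _ (TopologicalSpace.generateFrom _) A
      rw [TopologicalSpace.nhds_generateFrom]
      simp only [le_iInf_iff]
      rintro S ⟨hAS, U, hU, rfl⟩
      obtain ⟨z, hz, hz'⟩ := hAS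
      exact Filter.le_principal_iff.2 (Filter.mem_pure.2 ⟨z, h hz, hz'⟩)
    exact this.mem_closure

theorem vietoris_scott
    (hD : ∀ (Y : Type u) (tY : TopologicalSpace Y), K Y tY → @DSpace Y tY)
    (hAdeq : Adequate K) {X : Type u} [TopologicalSpace X] [T0Space X] :
    scottTop ↥(KSets K X) ≤ lowerVietoris (KSets K X) := by
  intro U hU
  letI := lowerVietoris (KSets K X)
  have hs : ∀ A B : ↥(KSets K X), specLE A B ↔ A ≤ B := vietoris_spec
  obtain ⟨h1, h2⟩ := (hD _ _ (hAdeq X _ inferInstance)).2.2 U hU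
  refine ⟨fun A B hAB hA => h1 A B ((hs _ _).2 hAB) hA, ?_⟩
  intro D hne hdir a ha haU
  refine h2 D hne ?_ a ⟨fun d hd => (hs _ _).2 (ha.1 hd),
    fun b hb => (hs _ _).2 (ha.2 fun d hd => (hs _ _).1 (hb d hd))⟩ haU
  intro x hx y hy
  obtain ⟨z, hz, hxz, hyz⟩ := hdir x hx y hy
  exact ⟨z, hz, (hs _ _).2 hxz, (hs _ _).2 hyz⟩

theorem vietoris_reflection
    (hT0 : ∀ (Y : Type u) (tY : TopologicalSpace Y), K Y tY → @T0Space Y tY)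
    (hAdeq : Adequate K) {X : Type u} [tX : TopologicalSpace X] [T0Space X]
    (η : X → ↥(KSets K X)) (hη : ∀ x, (η x : Set X) = closure {x}) :
    IsKReflection K X tX _ (lowerVietoris (KSets K X)) η := by
  letI tV := lowerVietoris (KSets K X)
  have hKV : K ↥(KSets K X) tV := hAdeq X _ inferInstance
  have hmeet : ∀ x (U : Set X), IsOpen U → (((η x : Set X) ∩ U).Nonempty ↔ x ∈ U) := by
    intro x U hU
    rw [hη, closure_inter_open_nonempty_iff hU]
    simp
  have hcont : Continuous η := by
    refine continuous_generateFrom_iff.2 ?_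
    rintro S ⟨U, hU, rfl⟩
    convert hU using 1
    ext x
    exact hmeet x U hU
  have hdense : ∀ A : ↥(KSets K X), closure (η '' (A : Set X)) = closure {A} := by
    intro A
    obtain ⟨B, hB, -⟩ := A.2.2 _ tV hKV η hcont
    have hB : closure (η '' (A : Set X)) = closure {B} := hB
    have key : ∀ U : Set X, IsOpen U → (((A : Set X) ∩ U).Nonempty ↔ ((B : Set X) ∩ U).Nonempty) := by
      intro U hU
      have hO := vietoris_isOpen (KSets K X) hU
      have h1 := closure_inter_open_nonempty_iff (s := η '' (A : Set X)) hO
      have h2 := closure_inter_open_nonempty_iff (s := {B}) hO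
      rw [hB, h2] at h1
      constructor
      · rintro ⟨x, hx, hxU⟩
        obtain ⟨C, hC, hC'⟩ := h1.2 ⟨η x, ⟨x, hx, rfl⟩, (hmeet x U hU).2 hxU⟩
        rw [mem_singleton_iff] at hC
        subst hC
        exact hC'
      · intro h
        obtain ⟨_, ⟨x, hx, rfl⟩, hxU⟩ := h1.1 ⟨B, rfl, h⟩
        exact ⟨x, hx, (hmeet x U hU).1 hxU⟩
    have hAB : A = B := by
      apply Subtype.ext
      apply subset_antisymm
      · intro x hx
        by_contra hxB
        obtain ⟨z, hz, hz'⟩ := (key _ B.2.1.isOpen_compl).1 ⟨x, hx, hxB⟩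
        exact hz' hz
      · intro x hx
        by_contra hxB
        obtain ⟨z, hz, hz'⟩ := (key _ A.2.1.isOpen_compl).2 ⟨x, hx, hxB⟩
        exact hz' hz
    rw [hB, hAB]
  refine ⟨hKV, hcont, ?_⟩
  intro Y tY hY f hf
  have := hT0 Y tY hY
  have hex : ∀ A : ↥(KSets K X), ∃ y : Y, closure (f '' (A : Set X)) = closure {y} :=
    fun A => (A.2.2 Y tY hY f hf).exists
  choose g hg using hex
  refine ⟨g, ⟨?_, ?_⟩, ?_⟩
  · refine ⟨fun U hU => ?_⟩
    convert vietoris_isOpen (KSets K X) (hU.preimage hf) using 1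
    ext A
    have h1 := closure_inter_open_nonempty_iff (s := f '' (A : Set X)) hU
    have h2 := closure_inter_open_nonempty_iff (s := {g A}) hU
    rw [hg A, h2] at h1
    simp only [singleton_inter_nonempty] at h1
    rw [mem_preimage, h1]
    constructor
    · rintro ⟨_, ⟨x, hx, rfl⟩, hxU⟩
      exact ⟨x, hx, hxU⟩
    · rintro ⟨x, hx, hxU⟩
      exact ⟨f x, ⟨x, hx, rfl⟩, hxU⟩
  · funext x
    refine (inseparable_iff_closure_eq.2 ?_).eq
    rw [Function.comp_apply, ← hg, hη, closure_image_closure hf, image_singleton]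
  · rintro g' ⟨hg', hgf⟩
    funext A
    refine (inseparable_iff_closure_eq.2 ?_).eq
    rw [← hg, ← hgf, image_comp, ← closure_image_closure hg', hdense,
      closure_image_closure hg', image_singleton]

/-- If a `K`-space topology `t` on the carrier of a reflection is finer than the reflection
topology and the unit is still continuous, then the topologies agree. -/
theorem reflection_top_eq {X : Type u} {tX : TopologicalSpace X} {Z : Type u}
    {tV t : TopologicalSpace Z} {η : X → Z} (h : IsKReflection K X tX Z tV η)
    (hle : t ≤ tV) (ht : K Z t) (hη : @Continuous X Z tX t η) : t = tV := by
  obtain ⟨g, ⟨hg, hgη⟩, -⟩ := h.2.2 Z t ht η hη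
  have h1 : @Continuous Z Z tV tV g := continuous_le_rng hle hg
  have h2 := (h.2.2 Z tV h.1 η h.2.1).unique ⟨h1, hgη⟩ ⟨@continuous_id Z tV, rfl⟩
  subst h2
  exact le_antisymm hle (continuous_id_iff_le.1 hg)

theorem reflection_homeo {X : Type u} {tX : TopologicalSpace X} {Z W : Type u}
    {tZ : TopologicalSpace Z} {tW : TopologicalSpace W} {η : X → Z} {ξ : X → W}
    (h : IsKReflection K X tX Z tZ η) (k : IsKReflection K X tX W tW ξ) :
    Nonempty (Z ≃ₜ W) := by
  obtain ⟨g, ⟨hg, hgη⟩, -⟩ := h.2.2 W tW k.1 ξ k.2.1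
  obtain ⟨f, ⟨hf, hfξ⟩, -⟩ := k.2.2 Z tZ h.1 η h.2.1
  have h2 := (h.2.2 Z tZ h.1 η h.2.1).unique
    ⟨hf.comp hg, by rw [Function.comp_assoc, hgη, hfξ]⟩ ⟨continuous_id, rfl⟩
  have h3 := (k.2.2 W tW k.1 ξ k.2.1).unique
    ⟨hg.comp hf, by rw [Function.comp_assoc, hfξ, hgη]⟩ ⟨continuous_id, rfl⟩
  exact ⟨⟨⟨g, f, congrFun h2, congrFun h3⟩, hg, hf⟩⟩

theorem scott_continuous_orderIso {P Q : Type*} [Preorder P] [Preorder Q] (e : P ≃o Q) :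
    @Continuous P Q (scottTop P) (scottTop Q) e := by
  letI := scottTop P
  letI := scottTop Q
  refine ⟨fun U hU => ⟨fun a b hab ha => hU.1 (e.monotone hab) ha, ?_⟩⟩
  intro D hne hdir a ha haU
  have hdir' : DirectedOn (· ≤ ·) (e '' D) := by
    rintro _ ⟨x, hx, rfl⟩ _ ⟨y, hy, rfl⟩
    obtain ⟨z, hz, hxz, hyz⟩ := hdir x hx y hy
    exact ⟨e z, ⟨z, hz, rfl⟩, e.monotone hxz, e.monotone hyz⟩
  obtain ⟨_, ⟨d, hd, rfl⟩, hdU⟩ := hU.2 (e '' D) (hne.image e) hdir' (e a)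
    (e.isLUB_image'.2 ha) haU
  exact ⟨d, hd, hdU⟩

/-- A topology homeomorphic to a Scott space is the Scott topology of its specialization. -/
theorem scott_of_homeo {Q Z : Type*} [Preorder Q] [Preorder Z] {tZ : TopologicalSpace Z}
    (hspec : ∀ a b : Z, a ∈ closure {b} ↔ a ≤ b)
    (h : @Homeomorph Z Q tZ (scottTop Q)) : tZ ≤ scottTop Z := by
  letI := scottTop Q
  have hle : ∀ a b : Z, h a ≤ h b ↔ a ≤ b := by
    intro a b
    rw [← hspec, ← specializes_iff_mem_closure, ← h.isInducing.specializes_iff,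
      specializes_iff_mem_closure, scott_closure_singleton]
    rfl
  let e : Z ≃o Q := { h.toEquiv with map_rel_iff' := fun {a b} => hle a b }
  have hc : @Continuous Z Z tZ (scottTop Z) (e.symm ∘ h) :=
    @Continuous.comp Z Q Z tZ (scottTop Q) (scottTop Z) _ _
      (scott_continuous_orderIso e.symm) h.continuous
  have hid : e.symm ∘ h = id := by
    funext a
    exact e.symm_apply_apply a
  rw [hid] at hc
  exact continuous_id_iff_le.1 hc

theorem eta_scott {P : Type u} [PartialOrder P] (η : P → ↥(@KSets K P (scottTop P)))
    (hη : ∀ x : P, (η x : Set P) = {p : P | p ≤ x}) :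
    @Continuous P _ (scottTop P) (scottTop ↥(@KSets K P (scottTop P))) η := by
  letI := scottTop P
  letI := scottTop ↥(KSets K P)
  have hmono : ∀ a b, a ≤ b → η a ≤ η b := by
    intro a b hab
    show (η a : Set P) ⊆ η b
    rw [hη, hη]
    exact fun p hp => le_trans hp hab
  refine ⟨fun U hU => ⟨fun a b hab ha => hU.1 (hmono _ _ hab) ha, ?_⟩⟩
  intro D hne hdir a ha haU
  suffices h : DirectedOn (· ≤ ·) (η '' D) ∧ IsLUB (η '' D) (η a) by
    obtain ⟨_, ⟨d, hd, rfl⟩, hdU⟩ := hU.2 (η '' D) (hne.image η) h.1 (η a) h.2 haU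
    exact ⟨d, hd, hdU⟩
  refine ⟨?_, ?_, ?_⟩
  · rintro _ ⟨x, hx, rfl⟩ _ ⟨y, hy, rfl⟩
    obtain ⟨z, hz, hxz, hyz⟩ := hdir x hx y hy
    exact ⟨η z, ⟨z, hz, rfl⟩, hmono _ _ hxz, hmono _ _ hyz⟩
  · rintro _ ⟨x, hx, rfl⟩
    exact hmono _ _ (ha.1 hx)
  · intro B hB
    have hDB : ∀ d ∈ D, d ∈ (B : Set P) := by
      intro d hd
      have h1 : (η d : Set P) ⊆ B := hB ⟨d, hd, rfl⟩
      apply h1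
      rw [hη]
      exact le_refl d
    have hBo : IsScottOpen (B : Set P)ᶜ := B.2.1.isOpen_compl
    have haB : a ∈ (B : Set P) := by
      by_contra hcon
      obtain ⟨d, hd, hd'⟩ := hBo.2 D hne hdir a ha hcon
      exact hd' (hDB d hd)
    show (η a : Set P) ⊆ B
    rw [hη]
    intro p hp
    by_contra hcon
    exact hBo.1 hp hcon haB

end Helpers

/-- For a poset `P`, the `𝐊`-reflection of `Σ P` exists and is a Scott space
iff `Σ 𝐊(Σ P)` is a `𝐊`-space; in which case `⟨Σ 𝐊(Σ P), η⟩` with `η x = ↓x` is a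
`𝐊`-reflection of `Σ P`. -/
theorem stmt9
    (K : (Y : Type u) → TopologicalSpace Y → Prop)
    (hT0 : ∀ (Y : Type u) (tY : TopologicalSpace Y), K Y tY → @T0Space Y tY)
    (hSober : ∀ (Y : Type u) (tY : TopologicalSpace Y), @Sober Y tY → K Y tY)
    (hHomeo : ∀ (Y : Type u) (tY : TopologicalSpace Y) (Z : Type u) (tZ : TopologicalSpace Z),
      K Y tY → Nonempty (@Homeomorph Y Z tY tZ) → K Z tZ)
    (hD : ∀ (Y : Type u) (tY : TopologicalSpace Y), K Y tY → @DSpace Y tY)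
    (hAdeq : Adequate K)
    (P : Type u) [PartialOrder P] :
    (∀ x : P, {p : P | p ≤ x} ∈ @KSets K P (scottTop P)) ∧
    ∀ η : P → ↥(@KSets K P (scottTop P)),
      (∀ x : P, (η x : Set P) = {p : P | p ≤ x}) →
      (K ↥(@KSets K P (scottTop P)) (scottTop ↥(@KSets K P (scottTop P))) ↔
        ∃ (Q : Type u) (pQ : PartialOrder Q) (ξ : P → Q),
          IsKReflection K P (scottTop P) Q (@scottTop Q pQ.toPreorder) ξ) ∧
      (K ↥(@KSets K P (scottTop P)) (scottTop ↥(@KSets K P (scottTop P))) →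
        IsKReflection K P (scottTop P) ↥(@KSets K P (scottTop P))
          (scottTop ↥(@KSets K P (scottTop P))) η) := by
  letI tP := scottTop P
  haveI : T0Space P := scott_t0 P
  have hcl : ∀ x : P, closure {x} = {p : P | p ≤ x} := scott_closure_singleton
  refine ⟨fun x => ?_, ?_⟩
  · rw [← hcl]
    exact closure_sing_mem_KSets hT0 x
  intro η hη
  have hrefl : IsKReflection K P tP _ (lowerVietoris (KSets K P)) η :=
    vietoris_reflection hT0 hAdeq η (fun x => (hη x).trans (hcl x).symm)
  have hle := vietoris_scott (X := P) hD hAdeq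
  have hmore : K ↥(KSets K P) (scottTop ↥(KSets K P)) →
      IsKReflection K P tP ↥(KSets K P) (scottTop ↥(KSets K P)) η := by
    intro h
    rw [reflection_top_eq hrefl hle h (eta_scott η hη)]
    exact hrefl
  refine ⟨⟨fun h => ⟨↥(KSets K P), inferInstance, η, hmore h⟩, ?_⟩, hmore⟩
  rintro ⟨Q, pQ, ξ, hξ⟩
  obtain ⟨h⟩ := reflection_homeo hrefl hξ
  rw [le_antisymm hle (scott_of_homeo vietoris_spec h)]
  exact hrefl.1
end
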